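/- arXiv:1610.03418 — 7 statements merged into one kernel-verified Lean document; each statement's English description precedes it below -/
import Mathlib

section
/- No finite tree with at least two vertices admits a uniform avoidance coupling of two simple random walks. That is, if G = (V, E) is a finite connected acyclic simple graph with |V| ≥ 2, then there is no pair (T, s) forming a uniform avoidance coupling of two simple random walks on G. -/
open Finset

/-- A uniform avoidance coupling of two simple random walks on `G`:
stochasticity, stationarity, no collision, avoidance, and uniform faithfulness. -/
def IsUAC {V : Type*} [Fintype V] [DecidableEq V] (G : SimpleGraph V) [DecidableRel G.Adj]
    (T : V × V → V × V → ℝ) (s : V × V → ℝ) : Prop :=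
  (∀ p q : V × V, 0 ≤ T p q) ∧
  (∀ p : V × V, ∑ q : V × V, T p q = 1) ∧
  (∀ p : V × V, 0 ≤ s p) ∧
  (∑ p : V × V, s p) = 1 ∧
  (∀ q : V × V, ∑ p : V × V, s p * T p q = s q) ∧
  (∀ x : V, s (x, x) = 0) ∧
  (∀ x y x' y' : V, 0 < s (x, y) → 0 < T (x, y) (x', y') → x' ≠ y ∧ y' ≠ x') ∧
  (∀ x y : V, 0 < s (x, y) →
    (∀ x' : V, (∑ y' : V, T (x, y) (x', y')) =
      if G.Adj x x' then 1 / (G.degree x : ℝ) else 0) ∧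
    (∀ y' : V, (∑ x' : V, T (x, y) (x', y')) =
      if G.Adj y y' then 1 / (G.degree y : ℝ) else 0))

/-!
In the stationary regime the expected change of the distance between the two walkers is zero. On the
other hand, the walkers never stand on equal or adjacent vertices, so from `(x, y)` each of them has
a neighbour on a common geodesic towards the other, and each walker choosing it saves two units
compared with the trivial bound `dist x' y' ≤ dist x y + 2`. Hence the drift of the distance at
`(x, y)` is at most `2 - 2 / deg x - 2 / deg y`. Each walker is distributed proportionally to the
degree, so the mean of `1 / deg` is `|V| / (2 |E|)` for both, and averaging the drift gives
`|V| ≤ |E|`, which fails for trees.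
-/

open scoped Matrix

section Distance

variable {V : Type*} {G : SimpleGraph V} {x y : V}

lemma exists_adj_adj_dist_add_two_le (hxy : 1 < G.dist x y) :
    ∃ a b : V, G.Adj x a ∧ G.Adj y b ∧ G.dist a b + 2 ≤ G.dist x y := by
  obtain ⟨p, hp⟩ := SimpleGraph.exists_walk_of_dist_ne_zero (Nat.ne_zero_of_lt hxy)
  cases p with
  | nil => simp at hxy
  | @cons _ a _ hxa q =>
    obtain ⟨r, hr⟩ : ∃ r : G.Walk y a, r.length = q.length := ⟨q.reverse, q.length_reverse⟩
    cases r with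
    | nil => exact absurd (SimpleGraph.dist_eq_one_iff_adj.2 hxa) hxy.ne'
    | @cons _ b _ hyb r =>
      refine ⟨a, b, hxa, hyb, ?_⟩
      have hab : G.dist a b ≤ r.length := G.dist_comm ▸ SimpleGraph.dist_le r
      simp only [SimpleGraph.Walk.length_cons] at hp hr
      omega

lemma dist_add_ite_add_ite_le_of_adj [DecidableEq V] {a b x' y' : V} (hxa : G.Adj x a)
    (hyb : G.Adj y b) (hab : G.dist a b + 2 ≤ G.dist x y) (hx : G.Adj x x') (hy : G.Adj y y') :
    G.dist x' y' + 2 * (if x' = a then 1 else 0) + 2 * (if y' = b then 1 else 0)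
      ≤ G.dist x y + 2 := by
  have dist_move_left_le {u u' : V} (hu : G.Adj u u') (w : V) :
      G.dist u' w ≤ G.dist u w + 1 := by
    have := hu.symm.reachable.dist_triangle_left w
    rwa [SimpleGraph.dist_eq_one_iff_adj.2 hu.symm, add_comm] at this
  have dist_move_right_le {u u' : V} (hu : G.Adj u u') (w : V) :
      G.dist w u' ≤ G.dist w u + 1 := by
    have := hu.reachable.dist_triangle_right w
    rwa [SimpleGraph.dist_eq_one_iff_adj.2 hu] at this
  split_ifs with hxa' hyb' hyb'
  · subst hxa' hyb'
    omega
  · subst hxa'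
    calc G.dist x' y' + 2 * 1 + 2 * 0
        ≤ G.dist x' b + 1 + 1 + 2 := by
          have := dist_move_right_le hy x'
          have := dist_move_right_le hyb.symm x'
          omega
      _ ≤ G.dist x y + 2 := by omega
  · subst hyb'
    calc G.dist x' y' + 2 * 0 + 2 * 1
        ≤ G.dist a y' + 1 + 1 + 2 := by
          have := dist_move_left_le hx y'
          have := dist_move_left_le hxa.symm y'
          omega
      _ ≤ G.dist x y + 2 := by omega
  · calc G.dist x' y' ≤ G.dist x y' + 1 := dist_move_left_le hx y'
      _ ≤ G.dist x y + 2 := Nat.add_le_add_right (dist_move_right_le hy x) 1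

end Distance

section StationaryDistribution

variable {V : Type*} [Fintype V] {G : SimpleGraph V} [DecidableRel G.Adj]

/-- The transition matrix of the simple random walk on `G`. The row of an isolated vertex is zero,
so it is stochastic only in the absence of such vertices. -/
noncomputable def simpleWalkMatrix (G : SimpleGraph V) [DecidableRel G.Adj] : Matrix V V ℝ :=
  Matrix.of fun x y => if G.Adj x y then 1 / (G.degree x : ℝ) else 0

lemma sum_neighborFinset_div_degree (μ : V → ℝ) (v : V) :
    ∑ x ∈ G.neighborFinset v, μ x / G.degree x = (μ ᵥ* simpleWalkMatrix G) v := by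
  simp [SimpleGraph.neighborFinset_eq_filter, Finset.sum_filter, simpleWalkMatrix,
    Matrix.vecMul, dotProduct, G.adj_comm v, div_eq_mul_inv]

lemma degree_mul_div_degree_of_stationary {μ : V → ℝ} (hμ : μ ᵥ* simpleWalkMatrix G = μ) (v : V) :
    G.degree v * (μ v / G.degree v) = μ v := by
  refine mul_div_cancel_of_imp' fun hdeg => ?_
  have hempty : G.neighborFinset v = ∅ := by
    rw [← Finset.card_eq_zero, G.card_neighborFinset_eq_degree]
    exact_mod_cast hdeg
  rw [← congrFun hμ v, ← sum_neighborFinset_div_degree, hempty, Finset.sum_empty]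

lemma lapMatrix_mulVec_div_degree_of_stationary [DecidableEq V] {μ : V → ℝ}
    (hμ : μ ᵥ* simpleWalkMatrix G = μ) :
    G.lapMatrix ℝ *ᵥ (fun x => μ x / G.degree x) = 0 := by
  ext v
  rw [SimpleGraph.lapMatrix_mulVec_apply, sum_neighborFinset_div_degree, hμ,
    degree_mul_div_degree_of_stationary hμ, sub_self, Pi.zero_apply]

lemma div_degree_mul_two_card_edgeFinset_of_stationary (hconn : G.Preconnected) {μ : V → ℝ}
    (hμ : μ ᵥ* simpleWalkMatrix G = μ) (v : V) :
    μ v / G.degree v * (2 * #G.edgeFinset) = ∑ x, μ x := by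
  classical
  have hconst : ∀ x y : V, G.Reachable x y → μ x / G.degree x = μ y / G.degree y :=
    SimpleGraph.lapMatrix_mulVec_eq_zero_iff_forall_reachable G |>.1
      (lapMatrix_mulVec_div_degree_of_stationary hμ)
  calc μ v / G.degree v * (2 * #G.edgeFinset)
      = ∑ x, (G.degree x : ℝ) * (μ v / G.degree v) := by
        rw [← Finset.sum_mul, mul_comm]
        exact_mod_cast congrArg (fun n : ℕ => (n : ℝ) * (μ v / G.degree v))
          G.sum_degrees_eq_twice_card_edges.symm
    _ = ∑ x, μ x := Finset.sum_congr rfl fun x _ => by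
        rw [hconst v x (hconn v x), degree_mul_div_degree_of_stationary hμ]

lemma sum_div_degree_mul_two_card_edgeFinset_of_stationary (hconn : G.Preconnected) {μ : V → ℝ}
    (hμ : μ ᵥ* simpleWalkMatrix G = μ) :
    (∑ x, μ x / G.degree x) * (2 * #G.edgeFinset) = Fintype.card V * ∑ x, μ x := by
  simp_rw [Finset.sum_mul, div_degree_mul_two_card_edgeFinset_of_stationary hconn hμ,
    Finset.sum_const, Finset.card_univ, nsmul_eq_mul]

end StationaryDistribution

/-- A stationary Markovian coupling of two simple random walks on `G`: a stochastic matrix `T` on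
pairs of vertices, a stationary distribution `s` of `T`, and faithfulness on the support of `s`.
Unlike `IsUAC`, whose avoidance condition lets the first walker move before the second, this notion
is symmetric in the two walkers. -/
structure IsStationaryCoupling {V : Type*} [Fintype V] (G : SimpleGraph V) [DecidableRel G.Adj]
    (T : V × V → V × V → ℝ) (s : V × V → ℝ) : Prop where
  T_nonneg (p q : V × V) : 0 ≤ T p q
  sum_T (p : V × V) : ∑ q, T p q = 1
  s_nonneg (p : V × V) : 0 ≤ s p
  sum_s : ∑ p, s p = 1
  stationary (q : V × V) : ∑ p, s p * T p q = s q
  faithful_fst {x y : V} (hs : 0 < s (x, y)) (x' : V) :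
    ∑ y', T (x, y) (x', y') = simpleWalkMatrix G x x'
  faithful_snd {x y : V} (hs : 0 < s (x, y)) (y' : V) :
    ∑ x', T (x, y) (x', y') = simpleWalkMatrix G y y'

namespace IsStationaryCoupling

variable {V : Type*} [Fintype V] {G : SimpleGraph V} [DecidableRel G.Adj]
  {T : V × V → V × V → ℝ} {s : V × V → ℝ} {x y x' y' : V}

lemma swap (h : IsStationaryCoupling G T s) :
    IsStationaryCoupling G (fun p q => T p.swap q.swap) (fun p => s p.swap) where
  T_nonneg _ _ := h.T_nonneg _ _
  sum_T p := ((Equiv.prodComm V V).sum_comp (T p.swap)).trans (h.sum_T p.swap)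
  s_nonneg _ := h.s_nonneg _
  sum_s := ((Equiv.prodComm V V).sum_comp s).trans h.sum_s
  stationary q := ((Equiv.prodComm V V).sum_comp fun p => s p * T p q.swap).trans
    (h.stationary q.swap)
  faithful_fst hs := h.faithful_snd hs
  faithful_snd hs := h.faithful_fst hs

lemma adj_fst (h : IsStationaryCoupling G T s) (hs : 0 < s (x, y)) (hT : T (x, y) (x', y') ≠ 0) :
    G.Adj x x' := by
  have hrow := h.faithful_fst hs x'
  by_contra hadj
  rw [simpleWalkMatrix, Matrix.of_apply, if_neg hadj,
    Finset.sum_eq_zero_iff_of_nonneg fun _ _ => h.T_nonneg _ _] at hrow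
  exact hT (hrow y' (Finset.mem_univ y'))

lemma adj_snd (h : IsStationaryCoupling G T s) (hs : 0 < s (x, y)) (hT : T (x, y) (x', y') ≠ 0) :
    G.Adj y y' :=
  h.swap.adj_fst (x := y) (y := x) (x' := y') (y' := x') hs hT

lemma sum_mul_ite_fst [DecidableEq V] (h : IsStationaryCoupling G T s) (hs : 0 < s (x, y))
    {a : V} (ha : G.Adj x a) :
    ∑ q, T (x, y) q * (if q.1 = a then 1 else 0) = 1 / G.degree x := by
  have hrow := h.faithful_fst hs a
  rw [simpleWalkMatrix, Matrix.of_apply, if_pos ha] at hrow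
  rw [Fintype.sum_prod_type_right, ← hrow]
  simp

lemma sum_mul_ite_snd [DecidableEq V] (h : IsStationaryCoupling G T s) (hs : 0 < s (x, y))
    {b : V} (hb : G.Adj y b) :
    ∑ q, T (x, y) q * (if q.2 = b then 1 else 0) = 1 / G.degree y :=
  ((Equiv.prodComm V V).sum_comp fun q => T (x, y) q * (if q.2 = b then 1 else 0)).symm.trans
    (h.swap.sum_mul_ite_fst (x := y) (y := x) hs hb)

lemma sum_mul_dist_le (h : IsStationaryCoupling G T s) (hs : 0 < s (x, y)) (hxy : 1 < G.dist x y) :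
    ∑ q, T (x, y) q * (G.dist q.1 q.2 : ℝ)
      ≤ G.dist x y + 2 - 2 * (1 / G.degree x) - 2 * (1 / G.degree y) := by
  classical
  obtain ⟨a, b, hxa, hyb, hab⟩ := exists_adj_adj_dist_add_two_le hxy
  have hpoint (q : V × V) :
      T (x, y) q * (G.dist q.1 q.2 + 2 * (if q.1 = a then 1 else 0)
        + 2 * (if q.2 = b then 1 else 0)) ≤ T (x, y) q * (G.dist x y + 2) := by
    obtain hT | hT := eq_or_ne (T (x, y) q) 0
    · simp [hT]
    · refine mul_le_mul_of_nonneg_left ?_ (h.T_nonneg _ _)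
      exact_mod_cast dist_add_ite_add_ite_le_of_adj hxa hyb hab (h.adj_fst hs hT) (h.adj_snd hs hT)
  have hsum := Finset.sum_le_sum fun q (_ : q ∈ Finset.univ) => hpoint q
  simp only [mul_add, mul_left_comm _ (2 : ℝ), Finset.sum_add_distrib, ← Finset.mul_sum,
    ← Finset.sum_mul, h.sum_T, h.sum_mul_ite_fst hs hxa, h.sum_mul_ite_snd hs hyb] at hsum
  linarith

lemma sum_mul_sum_mul (h : IsStationaryCoupling G T s) (f : V × V → ℝ) :
    ∑ p, s p * ∑ q, T p q * f q = ∑ q, s q * f q := by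
  have hvec : s ᵥ* Matrix.of T = s := funext h.stationary
  calc ∑ p, s p * ∑ q, T p q * f q = s ⬝ᵥ Matrix.of T *ᵥ f := rfl
    _ = s ⬝ᵥ f := by rw [Matrix.dotProduct_mulVec, hvec]

lemma vecMul_marginal_fst (h : IsStationaryCoupling G T s) :
    (fun x => ∑ y, s (x, y)) ᵥ* simpleWalkMatrix G = fun x => ∑ y, s (x, y) := by
  ext x'
  have hrow (p : V × V) : s p * simpleWalkMatrix G p.1 x' = s p * ∑ y', T p (x', y') := by
    obtain hs | hs := (h.s_nonneg p).eq_or_lt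
    · simp [← hs]
    · rw [h.faithful_fst hs]
  calc ∑ x, (∑ y, s (x, y)) * simpleWalkMatrix G x x'
      = ∑ p : V × V, s p * simpleWalkMatrix G p.1 x' := by
        simp only [Fintype.sum_prod_type, Finset.sum_mul]
    _ = ∑ y', ∑ p, s p * T p (x', y') := by
        simp only [hrow, Finset.mul_sum]
        exact Finset.sum_comm
    _ = ∑ y', s (x', y') := Finset.sum_congr rfl fun y' _ => h.stationary (x', y')

lemma sum_mul_one_div_degree_fst (h : IsStationaryCoupling G T s) (hconn : G.Preconnected) :
    (∑ p, s p * (1 / (G.degree p.1 : ℝ))) * (2 * #G.edgeFinset) = Fintype.card V := by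
  have hsum := sum_div_degree_mul_two_card_edgeFinset_of_stationary hconn h.vecMul_marginal_fst
  rw [← Fintype.sum_prod_type, h.sum_s, mul_one] at hsum
  simpa only [Fintype.sum_prod_type, Finset.sum_div, mul_one_div] using hsum

lemma sum_mul_one_div_degree_snd (h : IsStationaryCoupling G T s) (hconn : G.Preconnected) :
    (∑ p, s p * (1 / (G.degree p.2 : ℝ))) * (2 * #G.edgeFinset) = Fintype.card V := by
  rw [← h.swap.sum_mul_one_div_degree_fst hconn]
  congr 1
  exact ((Equiv.prodComm V V).sum_comp fun p => s p * (1 / (G.degree p.2 : ℝ))).symm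

lemma sum_mul_one_div_degree_add_le_one (h : IsStationaryCoupling G T s)
    (hdist : ∀ {x y : V}, 0 < s (x, y) → 1 < G.dist x y) :
    ∑ p, s p * (1 / (G.degree p.1 : ℝ)) + ∑ p, s p * (1 / (G.degree p.2 : ℝ)) ≤ 1 := by
  have hdrift (p : V × V) : s p * ∑ q, T p q * (G.dist q.1 q.2 : ℝ)
      ≤ s p * (G.dist p.1 p.2 + 2 - 2 * (1 / G.degree p.1) - 2 * (1 / G.degree p.2)) := by
    obtain hs | hs := (h.s_nonneg p).eq_or_lt
    · simp [← hs]
    · exact mul_le_mul_of_nonneg_left (h.sum_mul_dist_le hs (hdist hs)) hs.le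
  have hsum := Finset.sum_le_sum fun p (_ : p ∈ Finset.univ) => hdrift p
  simp only [h.sum_mul_sum_mul (fun q => (G.dist q.1 q.2 : ℝ)), mul_add, mul_sub,
    mul_left_comm _ (2 : ℝ), Finset.sum_add_distrib, Finset.sum_sub_distrib, ← Finset.mul_sum,
    ← Finset.sum_mul, h.sum_s] at hsum
  linarith

theorem card_le_card_edgeFinset (h : IsStationaryCoupling G T s)
    (hconn : G.Preconnected) (hdist : ∀ {x y : V}, 0 < s (x, y) → 1 < G.dist x y) :
    Fintype.card V ≤ #G.edgeFinset := by
  have hfst := h.sum_mul_one_div_degree_fst hconn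
  have hsnd := h.sum_mul_one_div_degree_snd hconn
  have hle := mul_le_mul_of_nonneg_right (h.sum_mul_one_div_degree_add_le_one hdist)
    (by positivity : (0 : ℝ) ≤ 2 * #G.edgeFinset)
  rw [add_mul, hfst, hsnd] at hle
  have : (Fintype.card V : ℝ) ≤ #G.edgeFinset := by linarith
  exact_mod_cast this

end IsStationaryCoupling

namespace IsUAC

variable {V : Type*} [Fintype V] [DecidableEq V] {G : SimpleGraph V} [DecidableRel G.Adj]
  {T : V × V → V × V → ℝ} {s : V × V → ℝ} {x y : V}

lemma isStationaryCoupling (h : IsUAC G T s) : IsStationaryCoupling G T s :=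
  have ⟨T_nonneg, sum_T, s_nonneg, sum_s, stationary, _, _, faithful⟩ := h
  { T_nonneg, sum_T, s_nonneg, sum_s, stationary
    faithful_fst := fun hs => (faithful _ _ hs).1
    faithful_snd := fun hs => (faithful _ _ hs).2 }

lemma ne_of_pos (h : IsUAC G T s) (hs : 0 < s (x, y)) : x ≠ y := by
  obtain ⟨-, -, -, -, -, diag, -⟩ := h
  rintro rfl
  exact hs.ne' (diag x)

lemma not_adj_of_pos (h : IsUAC G T s) (hs : 0 < s (x, y)) : ¬ G.Adj x y := by
  have ⟨T_nonneg, _, _, _, _, _, avoid, _⟩ := h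
  intro hadj
  have hrow := h.isStationaryCoupling.faithful_fst hs y
  have hzero : ∑ y', T (x, y) (y, y') = 0 := Finset.sum_eq_zero fun y' _ =>
    ((T_nonneg _ _).eq_or_lt.resolve_right fun hT => (avoid x y y y' hs hT).1 rfl).symm
  have hdeg : (G.degree x : ℝ) ≠ 0 :=
    Nat.cast_ne_zero.2 (G.degree_pos_iff_exists_adj x |>.2 ⟨y, hadj⟩).ne'
  rw [hzero, simpleWalkMatrix, Matrix.of_apply, if_pos hadj] at hrow
  exact one_div_ne_zero hdeg hrow.symm

theorem card_le_card_edgeFinset (h : IsUAC G T s) (hconn : G.Preconnected) :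
    Fintype.card V ≤ #G.edgeFinset :=
  h.isStationaryCoupling.card_le_card_edgeFinset hconn fun hs =>
    (hconn _ _).one_lt_dist_of_ne_of_not_adj (h.ne_of_pos hs) (h.not_adj_of_pos hs)

end IsUAC

/-- No finite tree with at least two vertices admits a uniform avoidance coupling
of two simple random walks. -/
theorem no_uac_on_tree {V : Type*} [Fintype V] [DecidableEq V]
    (G : SimpleGraph V) [DecidableRel G.Adj]
    (hconn : G.Connected) (hacyclic : G.IsAcyclic) (hcard : 2 ≤ Fintype.card V) :
    ¬ ∃ (T : V × V → V × V → ℝ) (s : V × V → ℝ), IsUAC G T s := by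
  rintro ⟨T, s, h⟩
  have hle : Fintype.card V ≤ #G.edgeFinset := h.card_le_card_edgeFinset hconn.preconnected
  have htree : #G.edgeFinset + 1 = Fintype.card V :=
    SimpleGraph.IsTree.card_edgeFinset ⟨hconn, hacyclic⟩
  omega
end

section
/- Let G be a finite simple graph on n ≥ 2 vertices that has a vertex adjacent to every other vertex. Then G admits no uniform avoidance coupling of two simple random walks. In particular, no complete graph K_n with n ≥ 2 admits a uniform avoidance coupling. -/
open Finset

/-!
A walker at `x` may step to any neighbour of `x`, and avoidance forbids a step onto the other
walker's current position, so the other walker is never at a neighbour of `x`. By stationarity the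
set of vertices visited by the first walker is closed under adjacency. In a connected graph the
first walker therefore visits every vertex `v`, and the other walker is then at a non-neighbour of
`v` different from `v`; no such vertex exists when `v` is adjacent to all others.
-/

namespace IsUAC

variable {V : Type*} [Fintype V] [DecidableEq V] {G : SimpleGraph V} [DecidableRel G.Adj]
  {T : V × V → V × V → ℝ} {s : V × V → ℝ} {p q : V × V} {x y v : V}

lemma exists_state_pos (h : IsUAC G T s) : ∃ p, 0 < s p := by
  obtain ⟨-, -, -, hs_sum, -⟩ := h
  obtain ⟨p, -, hp⟩ := exists_lt_of_sum_lt (s := univ) (f := 0) (g := s) (by simp [hs_sum])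
  exact ⟨p, hp⟩

lemma ne_of_state_pos (h : IsUAC G T s) (hxy : 0 < s (x, y)) : x ≠ y := by
  obtain ⟨-, -, -, -, -, hs_diag, -⟩ := h
  rintro rfl
  exact hxy.ne' (hs_diag x)

lemma state_pos_of_transition_pos (h : IsUAC G T s) (hp : 0 < s p) (hpq : 0 < T p q) :
    0 < s q := by
  obtain ⟨hT_nonneg, -, hs_nonneg, -, hs_stationary, -⟩ := h
  calc
    0 < s p * T p q := mul_pos hp hpq
    _ ≤ ∑ r, s r * T r q :=
      single_le_sum (fun r _ => mul_nonneg (hs_nonneg r) (hT_nonneg r q)) (mem_univ p)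
    _ = s q := hs_stationary q

lemma exists_transition_pos_of_adj (h : IsUAC G T s) (hxy : 0 < s (x, y)) (hxv : G.Adj x v) :
    ∃ w, 0 < T (x, y) (v, w) := by
  obtain ⟨-, -, -, -, -, -, -, h_faithful⟩ := h
  have h_marginal : 0 < ∑ w, T (x, y) (v, w) := by
    have h_degree : 0 < G.degree x := hxv.degree_pos_left
    rw [(h_faithful x y hxy).1 v, if_pos hxv]
    positivity
  obtain ⟨w, -, hw⟩ := exists_lt_of_sum_lt (s := univ) (f := 0) (g := fun w => T (x, y) (v, w))
    (by simpa using h_marginal)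
  exact ⟨w, hw⟩

lemma not_adj_of_state_pos (h : IsUAC G T s) (hxy : 0 < s (x, y)) : ¬ G.Adj x y := by
  intro hadj
  obtain ⟨w, hw⟩ := h.exists_transition_pos_of_adj hxy hadj
  obtain ⟨-, -, -, -, -, -, h_avoid, -⟩ := h
  exact (h_avoid x y y w hxy hw).1 rfl

lemma exists_state_pos_of_reachable (h : IsUAC G T s) (hxy : 0 < s (x, y))
    (hxv : G.Reachable x v) : ∃ w, 0 < s (v, w) := by
  obtain ⟨walk⟩ := hxv
  induction walk generalizing y with
  | nil => exact ⟨y, hxy⟩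
  | cons hadj _ ih =>
    obtain ⟨w, hw⟩ := h.exists_transition_pos_of_adj hxy hadj
    exact ih (h.state_pos_of_transition_pos hxy hw)

theorem exists_ne_not_adj (h : IsUAC G T s) (hG : G.Preconnected) (v : V) :
    ∃ w, w ≠ v ∧ ¬ G.Adj v w := by
  obtain ⟨⟨x, y⟩, hxy⟩ := h.exists_state_pos
  obtain ⟨w, hvw⟩ := h.exists_state_pos_of_reachable hxy (hG x v)
  exact ⟨w, (h.ne_of_state_pos hvw).symm, h.not_adj_of_state_pos hvw⟩

end IsUAC

/-- A finite simple graph on at least two vertices with a vertex adjacent to every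
other vertex admits no uniform avoidance coupling of two simple random walks.
In particular no complete graph on n ≥ 2 vertices does. -/
theorem no_uac_with_dominating_vertex {V : Type*} [Fintype V] [DecidableEq V]
    (G : SimpleGraph V) [DecidableRel G.Adj]
    (hcard : 2 ≤ Fintype.card V)
    (hdom : ∃ v : V, ∀ u : V, u ≠ v → G.Adj v u) :
    ¬ ∃ (T : V × V → V × V → ℝ) (s : V × V → ℝ), IsUAC G T s := by
  rintro ⟨T, s, h⟩
  obtain ⟨v, hv⟩ := hdom
  have hconn : G.Connected := .of_isUniversal fun u hu => hv u hu.symm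
  obtain ⟨w, hwv, hvw⟩ := h.exists_ne_not_adj hconn.preconnected v
  exact hvw (hv w hwv)
end

section
/- Let G = (V, E) be a finite simple graph and let F ⊆ V × V be its forbidden set. If (x, y) ∈ F, then for every uniform avoidance coupling (T, s) of two simple random walks on G, s(x, y) = 0. That is, every pair in the closure F is a forbidden state. -/
open Finset

/-- A set `S` of pairs is closed under the forbidden-state generation rules:
(i) it contains all diagonal and adjacent pairs; (ii) it contains every pair `(x, y)`
for which no nonnegative "flow" `w` exists that is supported on pairs of neighbors
`(u, v)` of `(x, y)` outside `S`, with row sums `1/d(x)` on `N(x)` and column sums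
`1/d(y)` on `N(y)`. The forbidden set `F` is the smallest such set. -/
def ForbiddenClosed {V : Type*} [Fintype V] [DecidableEq V]
    (G : SimpleGraph V) [DecidableRel G.Adj] (S : Set (V × V)) : Prop :=
  (∀ x y : V, (x = y ∨ G.Adj x y) → (x, y) ∈ S) ∧
  (∀ x y : V,
    (¬ ∃ w : V × V → ℝ,
      (∀ p : V × V, 0 ≤ w p) ∧
      (∀ u v : V, w (u, v) ≠ 0 → G.Adj x u ∧ G.Adj y v ∧ (u, v) ∉ S) ∧
      (∀ u : V, G.Adj x u → ∑ v : V, w (u, v) = 1 / (G.degree x : ℝ)) ∧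
      (∀ v : V, G.Adj y v → ∑ u : V, w (u, v) = 1 / (G.degree y : ℝ))) →
    (x, y) ∈ S)

/-!
Passing to complements turns the least forbidden-closed set into a greatest fixed point: the states
outside it are those from which the two walks can be moved forever, each by uniform steps, without
leaving a set of pairs on which they never collide. The support of the stationary law of a uniform
avoidance coupling is such a set, because stationarity keeps the coupled chain inside it. Hence its
complement is forbidden-closed and contains the forbidden set.
-/

theorem pos_of_sum_mul_le {α R : Type*} [Fintype α] [Semiring R] [PartialOrder R]
    [IsStrictOrderedRing R] {s t : α → R} {c : R} (hs : ∀ a, 0 ≤ s a) (ht : ∀ a, 0 ≤ t a)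
    (h : ∑ a, s a * t a ≤ c) {a : α} (hsa : 0 < s a) (hta : 0 < t a) : 0 < c :=
  calc
    0 < s a * t a := mul_pos hsa hta
    _ ≤ ∑ b, s b * t b := single_le_sum (fun b _ ↦ mul_nonneg (hs b) (ht b)) (mem_univ a)
    _ ≤ c := h

section Coupling

variable {V : Type*} [Fintype V] (G : SimpleGraph V) [DecidableRel G.Adj]

/-- `w` is the joint law of one simple random walk step from `x` and one from `y`: its marginals are
the uniform laws on the two neighborhoods. Both marginals are prescribed on all of `V`, so the
support of `w` consists of pairs of neighbors. If `x` and `y` are both isolated, the only step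
coupling is `w = 0`, matching the empty flow in `ForbiddenClosed`. -/
structure IsStepCoupling (x y : V) (w : V × V → ℝ) : Prop where
  nonneg : ∀ p, 0 ≤ w p
  sum_left : ∀ u, ∑ v, w (u, v) = if G.Adj x u then 1 / (G.degree x : ℝ) else 0
  sum_right : ∀ v, ∑ u, w (u, v) = if G.Adj y v then 1 / (G.degree y : ℝ) else 0

namespace IsStepCoupling

variable {G} {x y u v : V} {w : V × V → ℝ}

theorem swap (hw : IsStepCoupling G x y w) : IsStepCoupling G y x (w ∘ Prod.swap) where
  nonneg p := hw.nonneg p.swap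
  sum_left := hw.sum_right
  sum_right := hw.sum_left

theorem adj_left (hw : IsStepCoupling G x y w) (huv : w (u, v) ≠ 0) : G.Adj x u := by
  by_contra hxu
  have hsum : ∑ v, w (u, v) = 0 := by rw [hw.sum_left, if_neg hxu]
  exact huv <| (sum_eq_zero_iff_of_nonneg fun _ _ ↦ hw.nonneg _).1 hsum v (mem_univ v)

theorem adj_right (hw : IsStepCoupling G x y w) (huv : w (u, v) ≠ 0) : G.Adj y v :=
  hw.swap.adj_left huv

theorem exists_ne_zero (hw : IsStepCoupling G x y w) (hxu : G.Adj x u) :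
    ∃ v, w (u, v) ≠ 0 := by
  have hdeg : (G.degree x : ℝ) ≠ 0 :=
    Nat.cast_ne_zero.2 ((G.degree_pos_iff_exists_adj x).2 ⟨u, hxu⟩).ne'
  have hsum : ∑ v, w (u, v) ≠ 0 := by
    rw [hw.sum_left, if_pos hxu]
    exact one_div_ne_zero hdeg
  obtain ⟨v, -, hv⟩ := exists_ne_zero_of_sum_ne_zero hsum
  exact ⟨v, hv⟩

end IsStepCoupling

/-- `A` is a set of states from which two walkers can keep avoiding each other: it contains no
collision, and each of its states has a step coupling that stays in `A` and never moves the first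
walker onto the current position of the second. -/
structure IsViable (A : Set (V × V)) : Prop where
  diag_notMem : ∀ x, (x, x) ∉ A
  exists_isStepCoupling : ∀ x y, (x, y) ∈ A →
    ∃ w, IsStepCoupling G x y w ∧ ∀ u v, w (u, v) ≠ 0 → u ≠ y ∧ (u, v) ∈ A

namespace IsViable

variable {G} {A : Set (V × V)} {x y : V}

theorem not_adj (hA : IsViable G A) (hxy : (x, y) ∈ A) : ¬ G.Adj x y := by
  intro hadj
  obtain ⟨w, hw, hsupp⟩ := hA.exists_isStepCoupling x y hxy
  obtain ⟨v, hv⟩ := hw.exists_ne_zero hadj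
  exact (hsupp y v hv).1 rfl

theorem forbiddenClosed_compl [DecidableEq V] (hA : IsViable G A) : ForbiddenClosed G Aᶜ := by
  refine ⟨?_, fun x y hflow hxy ↦ hflow ?_⟩
  · rintro x y (rfl | hadj) hxy
    · exact hA.diag_notMem x hxy
    · exact hA.not_adj hxy hadj
  · obtain ⟨w, hw, hsupp⟩ := hA.exists_isStepCoupling x y hxy
    refine ⟨w, hw.nonneg, fun u v huv ↦ ?_, fun u hu ↦ ?_, fun v hv ↦ ?_⟩
    · exact ⟨hw.adj_left huv, hw.adj_right huv, not_not_intro (hsupp u v huv).2⟩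
    · rw [hw.sum_left, if_pos hu]
    · rw [hw.sum_right, if_pos hv]

end IsViable

namespace IsUAC

variable {G} [DecidableEq V] {T : V × V → V × V → ℝ} {s : V × V → ℝ}

theorem isStepCoupling (h : IsUAC G T s) {x y : V} (hxy : 0 < s (x, y)) :
    IsStepCoupling G x y (T (x, y)) :=
  have ⟨hT, _, _, _, _, _, _, hfaithful⟩ := h
  ⟨hT (x, y), (hfaithful x y hxy).1, (hfaithful x y hxy).2⟩

theorem isViable_support (h : IsUAC G T s) : IsViable G (Function.support s) := by
  have ⟨hT, _, hs, _, hstationary, hdiag, havoid, _⟩ := h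
  refine ⟨fun x hx ↦ hx (hdiag x), fun x y hxy ↦ ?_⟩
  have hpos : 0 < s (x, y) := (hs _).lt_of_ne' hxy
  refine ⟨T (x, y), h.isStepCoupling hpos, fun u v huv ↦ ?_⟩
  have hstep : 0 < T (x, y) (u, v) := (hT _ _).lt_of_ne' huv
  have hnext : 0 < s (u, v) :=
    pos_of_sum_mul_le hs (fun p ↦ hT p (u, v)) (hstationary (u, v)).le hpos hstep
  exact ⟨(havoid x y u v hpos hstep).1, hnext.ne'⟩

end IsUAC

end Coupling

/-- Every pair in the forbidden set `F` (the smallest set closed under the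
forbidden-state generation rules) is a forbidden state: it has stationary
probability zero in every uniform avoidance coupling of two simple random walks. -/
theorem forbidden_states_are_forbidden {V : Type*} [Fintype V] [DecidableEq V]
    (G : SimpleGraph V) [DecidableRel G.Adj]
    (F : Set (V × V)) (hF : IsLeast {S : Set (V × V) | ForbiddenClosed G S} F)
    (x y : V) (hxy : (x, y) ∈ F)
    (T : V × V → V × V → ℝ) (s : V × V → ℝ) (h : IsUAC G T s) :
    s (x, y) = 0 := by
  by_contra hs
  exact hF.2 h.isViable_support.forbiddenClosed_compl hxy hs
end

section
/- Let G be a finite simple graph with a nonempty vertex set that is bipartite (its vertex set can be partitioned into two parts with every edge joining the two parts) and in which every vertex has degree at least 2. Then G admits a uniform avoidance coupling of two simple random walks. -/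
open Finset

/-!
Two probability vectors `μ`, `ν` with `μ + ν ≤ 1` pointwise have a coupling avoiding the diagonal:
in a coupling of least diagonal mass, mass at `(a, a)` and mass at `(x, y)` with `x ≠ a`, `y ≠ a`
could be exchanged for mass at `(a, y)` and `(x, a)`, so if `(a, a)` is charged then all the mass
lies in the row or the column of `a`, whence `μ a + ν a > 1`.

The steps of simple random walks at two vertices of degree at least two satisfy this condition.
Moving two walkers by such couplings, distinct vertices on the same side of a bipartition go to
distinct vertices on the other side. These can never collide, not even with a walker that has not
moved yet, because the two walkers are never adjacent. A stationary distribution of the resulting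
finite chain completes the coupling.
-/

open scoped Matrix

section Stationary

variable {ι 𝕜 : Type*} [Fintype ι]

theorem exists_ne_zero_vecMul_eq_self [Nonempty ι] [CommRing 𝕜] [IsDomain 𝕜] {M : Matrix ι ι 𝕜}
    (hM : M *ᵥ 1 = 1) : ∃ v ≠ 0, v ᵥ* M = v := by
  classical
  have hdet : (M - 1).det = 0 :=
    Matrix.exists_mulVec_eq_zero_iff.1 ⟨1, one_ne_zero, by
      rw [Matrix.sub_mulVec, hM, Matrix.one_mulVec, sub_self]⟩
  obtain ⟨v, hv, hvM⟩ := Matrix.exists_vecMul_eq_zero_iff.2 hdet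
  rw [Matrix.vecMul_sub, Matrix.vecMul_one, sub_eq_zero] at hvM
  exact ⟨v, hv, hvM⟩

variable [DecidableEq ι] [LinearOrder 𝕜]

theorem abs_vecMul_eq_abs [Ring 𝕜] [IsOrderedRing 𝕜] {M : Matrix ι ι 𝕜}
    (hM : M ∈ Matrix.rowStochastic 𝕜 ι) {v : ι → 𝕜} (hv : v ᵥ* M = v) : |v| ᵥ* M = |v| := by
  have hle : ∀ j, |v| j ≤ (|v| ᵥ* M) j := fun j ↦
    calc |v j| = |∑ i, v i * M i j| := congrArg abs (congrFun hv j).symm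
      _ ≤ ∑ i, |v i * M i j| := abs_sum_le_sum_abs _ _
      _ = ∑ i, |v i| * M i j :=
        sum_congr rfl fun i _ ↦ by rw [abs_mul, abs_of_nonneg (hM.1 i j)]
  have hsum : ∑ j, |v| j = ∑ j, (|v| ᵥ* M) j := by
    simp only [← dotProduct_one, ← Matrix.dotProduct_mulVec, hM.2]
  exact funext fun j ↦ ((sum_eq_sum_iff_of_le fun j _ ↦ hle j).1 hsum j (mem_univ j)).symm

variable [Field 𝕜] [IsStrictOrderedRing 𝕜]

theorem exists_mem_stdSimplex_vecMul_eq_self [Nonempty ι] {M : Matrix ι ι 𝕜}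
    (hM : M ∈ Matrix.rowStochastic 𝕜 ι) :
    ∃ s ∈ stdSimplex 𝕜 ι, s ᵥ* M = s := by
  obtain ⟨v, hv, hvM⟩ := exists_ne_zero_vecMul_eq_self hM.2
  obtain ⟨i, hi⟩ := Function.ne_iff.1 hv
  have hpos : 0 < ∑ j, |v| j :=
    sum_pos' (fun j _ ↦ abs_nonneg (v j)) ⟨i, mem_univ i, abs_pos.2 hi⟩
  refine ⟨(∑ j, |v| j)⁻¹ • |v|,
    ⟨fun j ↦ mul_nonneg (inv_nonneg.2 hpos.le) (abs_nonneg (v j)), ?_⟩, ?_⟩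
  · simp only [Pi.smul_apply, smul_eq_mul, ← mul_sum]
    exact inv_mul_cancel₀ hpos.ne'
  · rw [Matrix.smul_vecMul, abs_vecMul_eq_abs hM hvM]

theorem exists_rowStochastic_eqOn_and_stationary {S : Set ι} (hS : S.Nonempty) {K : ι → ι → 𝕜}
    (hK : ∀ i ∈ S, K i ∈ stdSimplex 𝕜 ι) (hKS : ∀ i ∈ S, ∀ j ∉ S, K i j = 0) :
    ∃ M ∈ Matrix.rowStochastic 𝕜 ι, Set.EqOn M K S ∧
      ∃ s ∈ stdSimplex 𝕜 ι, s ᵥ* M = s ∧ ∀ j ∉ S, s j = 0 := by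
  classical
  obtain ⟨i₀, hi₀⟩ := hS
  have : Nonempty ι := ⟨i₀⟩
  -- Every row is supported in `S`, so stationarity alone forces `s` to vanish outside `S`.
  let M : Matrix ι ι 𝕜 := S.piecewise K fun _ ↦ Pi.single i₀ 1
  have hrow : ∀ i, M i ∈ stdSimplex 𝕜 ι ∧ ∀ j ∉ S, M i j = 0 := fun i ↦ by
    by_cases hi : i ∈ S
    · rw [show M i = K i from S.piecewise_eq_of_mem _ _ hi]
      exact ⟨hK i hi, hKS i hi⟩
    · rw [show M i = Pi.single i₀ 1 from S.piecewise_eq_of_notMem _ _ hi]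
      exact ⟨single_mem_stdSimplex 𝕜 i₀,
        fun j hj ↦ Pi.single_eq_of_ne (ne_of_mem_of_not_mem hi₀ hj).symm 1⟩
  have hM : M ∈ Matrix.rowStochastic 𝕜 ι :=
    Matrix.mem_rowStochastic_iff_sum.2 ⟨fun i ↦ (hrow i).1.1, fun i ↦ (hrow i).1.2⟩
  obtain ⟨s, hs, hsM⟩ := exists_mem_stdSimplex_vecMul_eq_self hM
  refine ⟨M, hM, S.piecewise_eqOn _ _, s, hs, hsM, fun j hj ↦ ?_⟩
  rw [← congrFun hsM j]
  exact sum_eq_zero fun i _ ↦ mul_eq_zero_of_right _ ((hrow i).2 j hj)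

end Stationary

section Coupling

variable {α β : Type*} [Fintype α] [Fintype β]

/-- The couplings of two nonnegative vectors `μ` and `ν`: the nonnegative matrices with row sums
`μ` and column sums `ν`. -/
def couplings (μ : α → ℝ) (ν : β → ℝ) : Set (α → β → ℝ) :=
  {π | (∀ x y, 0 ≤ π x y) ∧ (∀ x, ∑ y, π x y = μ x) ∧ ∀ y, ∑ x, π x y = ν y}

section Basic

variable {μ : α → ℝ} {ν : β → ℝ} {π : α → β → ℝ}

theorem le_left_of_mem_couplings (hπ : π ∈ couplings μ ν) (x : α) (y : β) : π x y ≤ μ x :=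
  hπ.2.1 x ▸ single_le_sum (fun y _ ↦ hπ.1 x y) (mem_univ y)

theorem le_right_of_mem_couplings (hπ : π ∈ couplings μ ν) (x : α) (y : β) : π x y ≤ ν y :=
  hπ.2.2 y ▸ single_le_sum (fun x _ ↦ hπ.1 x y) (mem_univ x)

theorem uncurry_mem_stdSimplex_of_mem_couplings (hπ : π ∈ couplings μ ν)
    (hμ : μ ∈ stdSimplex ℝ α) : (fun p : α × β ↦ π p.1 p.2) ∈ stdSimplex ℝ (α × β) :=
  ⟨fun p ↦ hπ.1 p.1 p.2, by simp only [Fintype.sum_prod_type, hπ.2.1, hμ.2]⟩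

theorem mul_mem_couplings (hμ : μ ∈ stdSimplex ℝ α) (hν : ν ∈ stdSimplex ℝ β) :
    (fun x y ↦ μ x * ν y) ∈ couplings μ ν :=
  ⟨fun x y ↦ mul_nonneg (hμ.1 x) (hν.1 y), fun x ↦ by rw [← mul_sum, hν.2, mul_one],
    fun y ↦ by rw [← sum_mul, hμ.2, one_mul]⟩

theorem isCompact_couplings (μ : α → ℝ) (ν : β → ℝ) : IsCompact (couplings μ ν) := by
  refine (isCompact_Icc (a := 0) (b := fun x _ ↦ μ x)).of_isClosed_subset ?_
    fun π hπ ↦ ⟨hπ.1, le_left_of_mem_couplings hπ⟩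
  simp only [couplings, Set.ofPred_and, Set.ofPred_forall]
  refine .inter (isClosed_iInter fun x ↦ isClosed_iInter fun y ↦ ?_)
    (.inter (isClosed_iInter fun x ↦ ?_) (isClosed_iInter fun y ↦ ?_))
  · exact isClosed_le (by fun_prop) (by fun_prop)
  · exact isClosed_eq (by fun_prop) (by fun_prop)
  · exact isClosed_eq (by fun_prop) (by fun_prop)

/-- The matrix obtained from `π` by moving mass `ε` from each of the entries `(a, b)` and `(x, y)`
to each of `(a, y)` and `(x, b)`; this preserves the row and column sums. -/
def exchange [DecidableEq α] [DecidableEq β] (π : α → β → ℝ) (ε : ℝ) (a x : α) (b y : β) :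
    α → β → ℝ :=
  fun u v ↦ π u v - ε * ((Pi.single a 1 - Pi.single x 1 : α → ℝ) u *
    (Pi.single b 1 - Pi.single y 1 : β → ℝ) v)

theorem exchange_mem_couplings [DecidableEq α] [DecidableEq β] (hπ : π ∈ couplings μ ν)
    {ε : ℝ} (hε : 0 ≤ ε) {a x : α} {b y : β} (hab : ε ≤ π a b) (hxy : ε ≤ π x y) :
    exchange π ε a x b y ∈ couplings μ ν := by
  refine ⟨fun u v ↦ ?_, fun u ↦ ?_, fun v ↦ ?_⟩
  · have huv := hπ.1 u v
    simp only [exchange, Pi.sub_apply, Pi.single_apply]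
    split_ifs <;> simp_all <;> linarith
  · simp [exchange, hπ.2.1, ← mul_sum]
  · simp [exchange, hπ.2.2, ← mul_sum, ← sum_mul]

end Basic

section Diagonal

variable {μ ν : α → ℝ} {π : α → α → ℝ}

theorem sum_exchange_diag_le [DecidableEq α] {ε : ℝ} (hε : 0 ≤ ε) {a x y : α} (hx : x ≠ a)
    (hy : y ≠ a) : ∑ u, exchange π ε a x a y u u ≤ ∑ u, π u u - ε := by
  have hdiag : ∑ u, (Pi.single a 1 - Pi.single x 1 : α → ℝ) u *
      (Pi.single a 1 - Pi.single y 1 : α → ℝ) u = 1 + if y = x then 1 else 0 := by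
    simp [mul_sub, sum_sub_distrib, Pi.single_apply, hy, hx.symm]
  simp only [exchange, sum_sub_distrib, ← mul_sum, hdiag]
  split_ifs <;> linarith

theorem eq_zero_of_isMinOn_sum_diag (hπ : π ∈ couplings μ ν)
    (hmin : IsMinOn (fun π ↦ ∑ u, π u u) (couplings μ ν) π) {a x y : α} (ha : 0 < π a a)
    (hx : x ≠ a) (hy : y ≠ a) : π x y = 0 := by
  classical
  by_contra hne
  have hε : 0 < min (π a a) (π x y) := lt_min ha ((hπ.1 x y).lt_of_ne' hne)
  have hle := hmin (exchange_mem_couplings hπ hε.le (min_le_left _ _) (min_le_right _ _))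
  have hlt := sum_exchange_diag_le (π := π) hε.le hx hy
  simp only [Set.mem_ofPred_eq] at hle
  linarith

theorem sum_add_apply_eq_of_forall_ne (hπ : π ∈ couplings μ ν) {a : α}
    (h : ∀ x ≠ a, ∀ y ≠ a, π x y = 0) : ∑ x, μ x + π a a = μ a + ν a := by
  classical
  have hμ : ∀ x ≠ a, μ x = π x a := fun x hx ↦ by
    rw [← hπ.2.1 x, Fintype.sum_eq_single a (h x hx)]
  rw [← hπ.2.2 a, Fintype.sum_eq_add_sum_compl a μ, Fintype.sum_eq_add_sum_compl a (π · a),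
    sum_congr rfl fun x hx ↦ hμ x (by simpa using hx)]
  ring

theorem exists_mem_couplings_diag_eq_zero (hμ : μ ∈ stdSimplex ℝ α) (hν : ν ∈ stdSimplex ℝ α)
    (h : ∀ x, μ x + ν x ≤ 1) : ∃ π ∈ couplings μ ν, ∀ x, π x x = 0 := by
  obtain ⟨π, hπ, hmin⟩ := (isCompact_couplings μ ν).exists_isMinOn ⟨_, mul_mem_couplings hμ hν⟩
    (f := fun π ↦ ∑ u, π u u) (by fun_prop)
  refine ⟨π, hπ, fun a ↦ ?_⟩
  by_contra hne
  have ha : 0 < π a a := (hπ.1 a a).lt_of_ne' hne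
  have hsum := sum_add_apply_eq_of_forall_ne hπ fun x hx y hy ↦
    eq_zero_of_isMinOn_sum_diag hπ hmin ha hx hy
  linarith [h a, hμ.2]

end Diagonal

end Coupling

section Walk

variable {V : Type*} [Fintype V] (G : SimpleGraph V) [DecidableRel G.Adj]

/-- The distribution of one step of the simple random walk on `G` from `x`. It is zero if `x` is
isolated. -/
noncomputable def stepDist (x : V) : V → ℝ :=
  fun x' ↦ if G.Adj x x' then 1 / (G.degree x : ℝ) else 0

variable {G}

theorem stepDist_mem_stdSimplex {x : V} (hx : 0 < G.degree x) : stepDist G x ∈ stdSimplex ℝ V := by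
  refine ⟨fun x' ↦ ?_, ?_⟩
  · unfold stepDist; positivity
  · simp only [stepDist, ← sum_filter, ← G.neighborFinset_eq_filter, sum_const,
      G.card_neighborFinset_eq_degree, nsmul_eq_mul]
    exact mul_one_div_cancel (by exact_mod_cast hx.ne')

theorem stepDist_le_half {x : V} (hx : 2 ≤ G.degree x) (x' : V) : stepDist G x x' ≤ 1 / 2 := by
  unfold stepDist
  split_ifs
  · exact one_div_le_one_div_of_le two_pos (by exact_mod_cast hx)
  · norm_num

theorem adj_of_stepDist_pos {x x' : V} (h : 0 < stepDist G x x') : G.Adj x x' := by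
  by_contra hadj
  simp [stepDist, hadj] at h

theorem exists_avoiding_mem_couplings_stepDist {x y : V} (hx : 2 ≤ G.degree x)
    (hy : 2 ≤ G.degree y) : ∃ π ∈ couplings (stepDist G x) (stepDist G y),
      ∀ x' y', 0 < π x' y' → G.Adj x x' ∧ G.Adj y y' ∧ x' ≠ y' := by
  obtain ⟨π, hπ, hdiag⟩ := exists_mem_couplings_diag_eq_zero
    (stepDist_mem_stdSimplex (two_pos.trans_le hx)) (stepDist_mem_stdSimplex (two_pos.trans_le hy))
    fun z ↦ by linarith [stepDist_le_half hx z, stepDist_le_half hy z]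
  refine ⟨π, hπ, fun x' y' hpos ↦
    ⟨adj_of_stepDist_pos (hpos.trans_le (le_left_of_mem_couplings hπ x' y')),
      adj_of_stepDist_pos (hpos.trans_le (le_right_of_mem_couplings hπ x' y')), ?_⟩⟩
  rintro rfl
  exact hpos.ne' (hdiag x')

theorem exists_isUAC_of_forall_mem_couplings [DecidableEq V] {S : Set (V × V)} (hS : S.Nonempty)
    (hne : ∀ x y, (x, y) ∈ S → x ≠ y) (hdeg : ∀ x y, (x, y) ∈ S → 0 < G.degree x)
    (hstep : ∀ x y, (x, y) ∈ S → ∃ π ∈ couplings (stepDist G x) (stepDist G y),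
      ∀ x' y', 0 < π x' y' → (x', y') ∈ S ∧ x' ≠ y) :
    ∃ (T : V × V → V × V → ℝ) (s : V × V → ℝ), IsUAC G T s := by
  choose! π hπ hπS using hstep
  obtain ⟨T, hT, hTπ, s, ⟨hs0, hs1⟩, hsT, hsS⟩ := exists_rowStochastic_eqOn_and_stationary
    (K := fun p q ↦ π p.1 p.2 q.1 q.2) hS (fun p hp ↦
      uncurry_mem_stdSimplex_of_mem_couplings (hπ p.1 p.2 hp)
        (stepDist_mem_stdSimplex (hdeg p.1 p.2 hp)))
    (fun p hp q hq ↦ ((hπ p.1 p.2 hp).1 q.1 q.2).eq_of_not_lt' fun h ↦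
      hq (hπS p.1 p.2 hp q.1 q.2 h).1)
  have hmem : ∀ p, 0 < s p → p ∈ S := fun p hp ↦ not_imp_comm.1 (hsS p) hp.ne'
  have hTxy : ∀ x y, 0 < s (x, y) → ∀ x' y', T (x, y) (x', y') = π x y x' y' :=
    fun x y hs x' y' ↦ congrFun (hTπ (hmem _ hs)) (x', y')
  refine ⟨T, s, hT.1, Matrix.sum_row_of_mem_rowStochastic hT, hs0, hs1, congrFun hsT,
    fun x ↦ hsS _ fun h ↦ hne x x h rfl, fun x y x' y' hs hpos ↦ ?_, fun x y hs ↦ ?_⟩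
  · rw [hTxy x y hs] at hpos
    obtain ⟨hx'y', hx'⟩ := hπS x y (hmem _ hs) x' y' hpos
    exact ⟨hx', (hne x' y' hx'y').symm⟩
  · simp only [hTxy x y hs]
    exact (hπ x y (hmem _ hs)).2

end Walk

theorem uac_of_bipartite_min_degree_two_general {V : Type*} [Fintype V] [DecidableEq V]
    (G : SimpleGraph V) [DecidableRel G.Adj] (c : G.ConnectedComponent)
    (hbip : ∃ A : Set V, ∀ x y : V, x ∈ c.supp → G.Adj x y → (x ∈ A ↔ y ∉ A))
    (hdeg : ∀ v ∈ c.supp, 2 ≤ G.degree v) :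
    ∃ (T : V × V → V × V → ℝ) (s : V × V → ℝ), IsUAC G T s := by
  obtain ⟨A, hA⟩ := hbip
  have hstay {x y : V} (hx : x ∈ c.supp) (hxy : G.Adj x y) : y ∈ c.supp :=
    c.mem_supp_of_adj_mem_supp hx hxy
  let S : Set (V × V) :=
    {p | p.1 ∈ c.supp ∧ p.2 ∈ c.supp ∧ p.1 ≠ p.2 ∧ (p.1 ∈ A ↔ p.2 ∈ A)}
  have hS : S.Nonempty := by
    obtain ⟨v, hv⟩ := c.nonempty_supp
    obtain ⟨a, ha, b, hb, hab⟩ := one_lt_card.1 (hdeg v hv)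
    rw [G.mem_neighborFinset] at ha hb
    have hsame : a ∈ A ↔ b ∈ A := not_iff_not.1 ((hA v a hv ha).symm.trans (hA v b hv hb))
    exact ⟨(a, b), hstay hv ha, hstay hv hb, hab, hsame⟩
  refine exists_isUAC_of_forall_mem_couplings hS (fun x y h ↦ h.2.2.1)
    (fun x y h ↦ two_pos.trans_le (hdeg x h.1)) ?_
  rintro x y ⟨hx, hy, -, hside⟩
  obtain ⟨π, hπ, hmove⟩ := exists_avoiding_mem_couplings_stepDist (hdeg x hx) (hdeg y hy)
  refine ⟨π, hπ, fun x' y' hpos ↦ ?_⟩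
  obtain ⟨hxx', hyy', hne⟩ := hmove x' y' hpos
  have hxA := hA x x' hx hxx'
  have hyA := hA y y' hy hyy'
  refine ⟨⟨hstay hx hxx', hstay hy hyy', hne, by tauto⟩, ?_⟩
  rintro rfl
  tauto

/-- Any nonempty finite bipartite graph in which every vertex has degree at least 2
admits a uniform avoidance coupling of two simple random walks. -/
theorem uac_of_bipartite_min_degree_two {V : Type*} [Fintype V] [DecidableEq V] [Nonempty V]
    (G : SimpleGraph V) [DecidableRel G.Adj]
    (hbip : ∃ A : Set V, ∀ x y : V, G.Adj x y → (x ∈ A ↔ y ∉ A))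
    (hdeg : ∀ v : V, 2 ≤ G.degree v) :
    ∃ (T : V × V → V × V → ℝ) (s : V × V → ℝ), IsUAC G T s := by
  obtain ⟨A, hA⟩ := hbip
  exact uac_of_bipartite_min_degree_two_general G
    (G.connectedComponentMk (Classical.arbitrary V)) ⟨A, fun x y _ ↦ hA x y⟩ fun v _ ↦ hdeg v
end

section
/- Let n ≥ 4 and let G be a simple graph on n vertices that is regular of degree n − 2 (so every vertex has exactly one non-neighbor). Then G admits a uniform avoidance coupling of two simple random walks. -/
open Finset

/-!
A fixed-point-free automorphism `σ` of `G` under which no vertex is adjacent to its image yields an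
avoidance coupling: keep the second walker at the `σ`-image of the first. The first walker never
steps onto the second because `x` and `σ x` are not adjacent, the second never lands on the first
because `σ` has no fixed point, and the second performs a simple random walk because `σ` is an
automorphism. If every vertex has exactly one non-neighbor, sending each vertex to its non-neighbor
is such an automorphism.
-/

section GraphLift

variable {α β M : Type*} [DecidableEq β]

/-- The function on `α × β` equal to `f a` at each point `(a, σ a)` of the graph of `σ` and zero
elsewhere. For a probability weight `f`, it is the law of `(X, σ X)` with `X` of law `f`. -/
def graphLift [Zero M] (σ : α → β) (f : α → M) (p : α × β) : M :=
  if p.2 = σ p.1 then f p.1 else 0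

theorem graphLift_nonneg [Zero M] [Preorder M] {σ : α → β} {f : α → M} (hf : ∀ a, 0 ≤ f a)
    (p : α × β) : 0 ≤ graphLift σ f p := by
  unfold graphLift
  split_ifs
  exacts [hf p.1, le_rfl]

theorem graphLift_apply_ne_zero_iff [Zero M] {σ : α → β} {f : α → M} {a : α} {b : β} :
    graphLift σ f (a, b) ≠ 0 ↔ b = σ a ∧ f a ≠ 0 := by
  simp [graphLift]

theorem sum_graphLift_right [AddCommMonoid M] [Fintype β] (σ : α → β) (f : α → M) (a : α) :
    ∑ b, graphLift σ f (a, b) = f a := by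
  simp [graphLift]

theorem sum_graphLift_left [AddCommMonoid M] [Fintype α] (σ : α ≃ β) (f : α → M) (b : β) :
    ∑ a, graphLift σ f (a, b) = f (σ.symm b) := by
  classical
  simp [graphLift, ← Equiv.symm_apply_eq]

theorem sum_graphLift_mul [NonUnitalNonAssocSemiring M] [Fintype α] [Fintype β] (σ : α → β)
    (f : α → M) (g : α × β → M) : ∑ p, graphLift σ f p * g p = ∑ a, f a * g (a, σ a) := by
  simp [Fintype.sum_prod_type, graphLift]

theorem sum_graphLift [AddCommMonoid M] [Fintype α] [Fintype β] (σ : α → β) (f : α → M) :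
    ∑ p, graphLift σ f p = ∑ a, f a := by
  simp only [Fintype.sum_prod_type, sum_graphLift_right]

end GraphLift

section SimpleRandomWalk

variable {V : Type*} [Fintype V] (G : SimpleGraph V) [DecidableRel G.Adj]

/-- The transition probability of the simple random walk on `G` from `x` to `y`. The row of an
isolated vertex is zero. -/
noncomputable def walkTransition (x y : V) : ℝ :=
  if G.Adj x y then 1 / (G.degree x : ℝ) else 0

/-- The degree-proportional stationary distribution of the simple random walk on `G`. It is
identically zero when `G` has no edges. -/
noncomputable def walkStationary (x : V) : ℝ :=
  G.degree x / ∑ y, (G.degree y : ℝ)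

theorem walkTransition_nonneg (x y : V) : 0 ≤ walkTransition G x y := by
  unfold walkTransition
  positivity

theorem walkStationary_nonneg (x : V) : 0 ≤ walkStationary G x := by
  unfold walkStationary
  positivity

variable {G}

theorem adj_of_walkTransition_ne_zero {x y : V} (h : walkTransition G x y ≠ 0) : G.Adj x y :=
  of_not_not fun hxy ↦ h (if_neg hxy)

theorem sum_walkTransition {x : V} (hx : G.degree x ≠ 0) : ∑ y, walkTransition G x y = 1 := by
  simp only [walkTransition, ← sum_filter, sum_const,
    ← SimpleGraph.neighborFinset_eq_filter, SimpleGraph.card_neighborFinset_eq_degree, nsmul_eq_mul]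
  exact mul_one_div_cancel (Nat.cast_ne_zero.mpr hx)

theorem sum_walkStationary {x : V} (hx : G.degree x ≠ 0) : ∑ y, walkStationary G y = 1 := by
  have hpos : 0 < ∑ y, (G.degree y : ℝ) :=
    sum_pos' (fun y _ ↦ Nat.cast_nonneg _)
      ⟨x, mem_univ x, Nat.cast_pos.mpr (Nat.pos_of_ne_zero hx)⟩
  simp only [walkStationary, ← sum_div]
  exact div_self hpos.ne'

variable (G) in
theorem walkStationary_mul_walkTransition_comm (x y : V) :
    walkStationary G x * walkTransition G x y = walkStationary G y * walkTransition G y x := by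
  by_cases h : G.Adj x y
  · have hx : (G.degree x : ℝ) ≠ 0 := Nat.cast_ne_zero.mpr h.degree_pos_left.ne'
    have hy : (G.degree y : ℝ) ≠ 0 := Nat.cast_ne_zero.mpr h.degree_pos_right.ne'
    simp only [walkStationary, walkTransition, if_pos h, if_pos h.symm]
    field_simp
  · simp [walkTransition, h, G.adj_comm y x]

theorem sum_walkStationary_mul_walkTransition {y : V} (hy : G.degree y ≠ 0) :
    ∑ x, walkStationary G x * walkTransition G x y = walkStationary G y := by
  simp only [walkStationary_mul_walkTransition_comm G _ y, ← mul_sum,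
    sum_walkTransition hy, mul_one]

theorem walkTransition_map_iso {W : Type*} [Fintype W] {H : SimpleGraph W} [DecidableRel H.Adj]
    (σ : G ≃g H) (x y : V) : walkTransition H (σ x) (σ y) = walkTransition G x y := by
  simp only [walkTransition, σ.map_adj_iff, σ.degree_eq]

end SimpleRandomWalk

theorem isUAC_graphLift {V : Type*} [Fintype V] [DecidableEq V] [Nonempty V] {G : SimpleGraph V}
    [DecidableRel G.Adj] (σ : G ≃g G) (hσ : ∀ x, Gᶜ.Adj x (σ x)) (hdeg : ∀ x, G.degree x ≠ 0) :
    IsUAC G (fun p ↦ graphLift σ (walkTransition G p.1)) (graphLift σ (walkStationary G)) := by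
  refine ⟨fun p ↦ graphLift_nonneg (walkTransition_nonneg G p.1), fun p ↦ ?_,
    graphLift_nonneg (walkStationary_nonneg G), ?_, fun q ↦ ?stationary, fun x ↦ ?_,
    fun x y x' y' hs hT ↦ ?avoidance, fun x y hs ↦ ⟨fun x' ↦ ?_, fun y' ↦ ?second⟩⟩
  · rw [sum_graphLift, sum_walkTransition (hdeg p.1)]
  · rw [sum_graphLift, sum_walkStationary (hdeg (Classical.arbitrary V))]
  case stationary =>
    rw [sum_graphLift_mul]
    by_cases hq : q.2 = σ q.1
    · simpa only [graphLift, if_pos hq] using sum_walkStationary_mul_walkTransition (hdeg q.1)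
    · simp [graphLift, hq]
  · exact if_neg (hσ x).ne
  case avoidance =>
    obtain ⟨rfl, -⟩ := graphLift_apply_ne_zero_iff.mp hs.ne'
    obtain ⟨rfl, hstep⟩ := graphLift_apply_ne_zero_iff.mp hT.ne'
    have hadj : G.Adj x x' := adj_of_walkTransition_ne_zero hstep
    exact ⟨fun h ↦ ((G.compl_adj _ _).mp (hσ x)).2 (h ▸ hadj), (hσ x').ne'⟩
  · exact sum_graphLift_right σ (walkTransition G x) x'
  case second =>
    obtain ⟨rfl, -⟩ := graphLift_apply_ne_zero_iff.mp hs.ne'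
    calc ∑ x', graphLift σ (walkTransition G x) (x', y')
        = walkTransition G x (σ.symm y') := sum_graphLift_left σ.toEquiv _ y'
      _ = walkTransition G (σ x) y' := by
        rw [← walkTransition_map_iso σ, RelIso.apply_symm_apply]

theorem exists_iso_forall_adj_of_isRegularOfDegree_one {V : Type*} {H : SimpleGraph V}
    [H.LocallyFinite] (hH : H.IsRegularOfDegree 1) : ∃ σ : H ≃g H, ∀ x, H.Adj x (σ x) := by
  choose σ hσ huniq using fun x ↦ SimpleGraph.degree_eq_one_iff_existsUnique_adj.mp (hH x)
  have hinv : Function.Involutive σ := fun x ↦ (huniq (σ x) x (hσ x).symm).symm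
  have hadj (x y : V) : H.Adj x y ↔ y = σ x := ⟨huniq x y, fun h ↦ h ▸ hσ x⟩
  refine ⟨⟨hinv.toPerm, fun {x y} ↦ ?_⟩, hσ⟩
  rw [hinv.coe_toPerm, hadj, hadj, hinv.injective.eq_iff]

/-- An isomorphism of complements, read as an isomorphism of the graphs themselves through the same
bijection of vertices. -/
def isoOfComplIso {V W : Type*} {G : SimpleGraph V} {H : SimpleGraph W} (σ : Gᶜ ≃g Hᶜ) :
    G ≃g H where
  toEquiv := σ.toEquiv
  map_rel_iff' {x y} := by
    have h : Hᶜ.Adj (σ x) (σ y) ↔ Gᶜ.Adj x y := σ.map_adj_iff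
    rw [SimpleGraph.compl_adj, SimpleGraph.compl_adj, σ.injective.ne_iff] at h
    by_cases hxy : x = y
    · simp [hxy]
    · exact not_iff_not.mp (by simpa [hxy] using h)

/-- For $n ≥ 4$, any $(n-2)$-regular simple graph on $n$ vertices admits a uniform
avoidance coupling of two simple random walks. -/
theorem uac_of_regular_degree_sub_two {V : Type*} [Fintype V] [DecidableEq V]
    (G : SimpleGraph V) [DecidableRel G.Adj]
    (n : ℕ) (hn : 4 ≤ n) (hcard : Fintype.card V = n)
    (hreg : G.IsRegularOfDegree (n - 2)) :
    ∃ (T : V × V → V × V → ℝ) (s : V × V → ℝ), IsUAC G T s := by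
  have : Nonempty V := Fintype.card_pos_iff.mp (by lia)
  have hcompl : Gᶜ.IsRegularOfDegree 1 := by
    convert hreg.compl using 1
    lia
  have hdeg : ∀ x, G.degree x ≠ 0 := fun x ↦ by
    rw [hreg x]
    lia
  obtain ⟨σ, hσ⟩ := exists_iso_forall_adj_of_isRegularOfDegree_one hcompl
  exact ⟨_, _, isUAC_graphLift (isoOfComplIso σ) hσ hdeg⟩
end

section
/- Let G be a connected, non-complete strongly regular graph with parameters (n, k, λ, μ) such that 2·max(λ, μ) ≤ k or 2λ < k. Then the forbidden set F of G equals F_0 = {(x, y) ∈ V × V : x = y or x ~ y}; that is, the only forbidden states are the diagonal pairs and the adjacent pairs. -/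
open Finset

/-!
If `x` and `y` are distinct and non-adjacent, a perfect matching of `N(x)` with `N(y)` by pairs of
distinct non-adjacent vertices, given weight `1 / k` on each of its edges, is a flow for `(x, y)`
that avoids `F₀`. So `F₀` is closed as soon as such matchings exist.

If there is no matching, Hall's theorem yields `S ⊆ N(x)` and `T ⊆ N(y)` with `k < |S| + |T|` such
that every `s ∈ S` and `t ∈ T` are equal or adjacent. A vertex of `S ∩ T` is adjacent to `x`, `y`
and all the rest of `S ∪ T`, so `|S ∪ T| < k` and thus `|S ∩ T| ≥ 2`; but two vertices of `S ∩ T`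
then have at least `|S ∪ T|` common neighbors, forcing `|S| + |T| ≤ 2 |S ∪ T| ≤ 2λ ≤ k`. Hence
`S` and `T` are disjoint. If `x` had no neighbor in `T`, then `S` would lie in the `μ` common
neighbors of `x` and any `t ∈ T`, while `T` would miss the `μ` common neighbors of `x` and `y`,
giving `|S| + |T| ≤ μ + (k - μ)`. So `x` is adjacent to some `c ∈ T`, and `S ⊆ N(x) ∩ N(c)` gives
`|S| ≤ λ`. Symmetrically `|T| ≤ λ`, and again `|S| + |T| ≤ 2λ ≤ k`.
-/

/-- The Frobenius–König form of Hall's marriage theorem. -/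
theorem exists_equiv_forall_rel_of_card_add_card_le {α β : Type*} [Fintype α] [Fintype β]
    (hcard : Fintype.card α = Fintype.card β) (r : α → β → Prop)
    (h : ∀ (S : Finset α) (T : Finset β), (∀ a ∈ S, ∀ b ∈ T, ¬ r a b) → #S + #T ≤ Fintype.card β) :
    ∃ e : α ≃ β, ∀ a, r a (e a) := by
  classical
  obtain ⟨f, hinj, hf⟩ := (Fintype.all_card_le_filter_rel_iff_exists_injective r).1 fun S => by
    set B : Finset β := {b | ∃ a ∈ S, r a b}
    have hS : #S + #Bᶜ ≤ Fintype.card β := h S Bᶜ fun a ha b hb hab =>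
      mem_compl.1 hb (mem_filter.2 ⟨mem_univ b, a, ha, hab⟩)
    have hcompl := card_add_card_compl B
    omega
  exact ⟨.ofBijective f ((Fintype.bijective_iff_injective_and_card f).2 ⟨hinj, hcard⟩), hf⟩

section Flow

variable {V : Type*} [Fintype V] {G : SimpleGraph V} [DecidableRel G.Adj]

/-- The flows of the generation rule (ii) for the pair `(x, y)` and the set `S`: transport plans
avoiding `S` between the uniform distributions on `N(x)` and `N(y)`. The conjunction is spelled as
in `ForbiddenClosed`, so that rule (ii) reads `(¬ ∃ w, IsAvoidingFlow G S x y w) → (x, y) ∈ S`. -/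
def IsAvoidingFlow (G : SimpleGraph V) [DecidableRel G.Adj] (S : Set (V × V)) (x y : V)
    (w : V × V → ℝ) : Prop :=
  (∀ p, 0 ≤ w p) ∧
  (∀ u v, w (u, v) ≠ 0 → G.Adj x u ∧ G.Adj y v ∧ (u, v) ∉ S) ∧
  (∀ u, G.Adj x u → ∑ v, w (u, v) = 1 / (G.degree x : ℝ)) ∧
  (∀ v, G.Adj y v → ∑ u, w (u, v) = 1 / (G.degree y : ℝ))

theorem exists_isAvoidingFlow_of_equiv {S : Set (V × V)} {x y : V}
    (e : G.neighborSet x ≃ G.neighborSet y) (he : ∀ a : G.neighborSet x, (a.1, (e a).1) ∉ S) :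
    ∃ w, IsAvoidingFlow G S x y w := by
  classical
  have hdeg : G.degree x = G.degree y := by
    simpa only [G.card_neighborSet_eq_degree] using Fintype.card_congr e
  refine ⟨fun p => if ∃ a, (a.1, (e a).1) = p then 1 / (G.degree x : ℝ) else 0,
    fun p => ?_, fun u v huv => ?_, fun u hu => ?_, fun v hv => ?_⟩
  · dsimp only
    positivity
  · obtain ⟨a, ha⟩ := (ite_ne_right_iff.1 huv).1
    obtain ⟨rfl, rfl⟩ := Prod.mk.inj ha
    exact ⟨a.2, (e a).2, he a⟩
  · rw [Fintype.sum_ite_eq_ite_exists, if_pos ⟨(e ⟨u, hu⟩).1, ⟨u, hu⟩, rfl⟩]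
    rintro v v' ⟨a, ha⟩ ⟨a', ha'⟩
    obtain ⟨hau, rfl⟩ := Prod.mk.inj ha
    obtain ⟨hau', rfl⟩ := Prod.mk.inj ha'
    rw [Subtype.ext (hau.trans hau'.symm)]
  · rw [Fintype.sum_ite_eq_ite_exists, if_pos ⟨(e.symm ⟨v, hv⟩).1, e.symm ⟨v, hv⟩, by simp⟩, hdeg]
    rintro u u' ⟨a, ha⟩ ⟨a', ha'⟩
    obtain ⟨rfl, hav⟩ := Prod.mk.inj ha
    obtain ⟨rfl, hav'⟩ := Prod.mk.inj ha'
    rw [e.injective (Subtype.ext (hav.trans hav'.symm))]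

end Flow

section Neighbors

variable {V : Type*} [Fintype V] {G : SimpleGraph V} [DecidableRel G.Adj] {R : Finset V} {v w : V}

theorem card_le_degree_of_forall_adj (hv : ∀ r ∈ R, G.Adj v r) : #R ≤ G.degree v :=
  card_le_card fun r hr => (G.mem_neighborFinset v r).2 (hv r hr)

theorem card_le_card_commonNeighbors (hv : ∀ r ∈ R, G.Adj v r) (hw : ∀ r ∈ R, G.Adj w r) :
    #R ≤ Fintype.card (G.commonNeighbors v w) := by
  rw [← Set.toFinset_card]
  exact card_le_card fun r hr => Set.mem_toFinset.2 ⟨hv r hr, hw r hr⟩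

end Neighbors

/-- A potential violation of Hall's condition for matching `N(x)` with `N(y)` along `Gᶜ`: subsets
`S` of `N(x)` and `T` of `N(y)` with no edge of `Gᶜ` between them. It is an actual violation when
`#S + #T` exceeds the degree of `y`, which is left as a separate hypothesis. -/
structure IsHallObstruction {V : Type*} (G : SimpleGraph V) (x y : V) (S T : Finset V) : Prop where
  adj_left : ∀ s ∈ S, G.Adj x s
  adj_right : ∀ t ∈ T, G.Adj y t
  adj_of_ne : ∀ s ∈ S, ∀ t ∈ T, s ≠ t → G.Adj s t

namespace IsHallObstruction

variable {V : Type*} {G : SimpleGraph V} {x y : V} {S T : Finset V}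

theorem symm (h : IsHallObstruction G x y S T) : IsHallObstruction G y x T S :=
  ⟨h.adj_right, h.adj_left, fun t ht s hs hts => (h.adj_of_ne s hs t ht hts.symm).symm⟩

theorem adj_of_mem_inter [DecidableEq V] (h : IsHallObstruction G x y S T) {d : V}
    (hd : d ∈ S ∩ T) : ∀ r ∈ (insert x (insert y (S ∪ T))).erase d, G.Adj d r := by
  obtain ⟨hdS, hdT⟩ := mem_inter.1 hd
  intro r hr
  simp only [mem_erase, mem_insert, mem_union] at hr
  obtain ⟨hrd, rfl | rfl | hrS | hrT⟩ := hr
  · exact (h.adj_left d hdS).symm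
  · exact (h.adj_right d hdT).symm
  · exact (h.adj_of_ne r hrS d hdT hrd).symm
  · exact h.adj_of_ne d hdS r hrT hrd.symm

theorem card_insert_insert_union [DecidableEq V] (h : IsHallObstruction G x y S T)
    (hxy : Gᶜ.Adj x y) : #(insert x (insert y (S ∪ T))) = #(S ∪ T) + 2 := by
  have hxS : x ∉ S := fun hx => (h.adj_left x hx).ne rfl
  have hxT : x ∉ T := fun hx => hxy.2 (h.adj_right x hx).symm
  have hyS : y ∉ S := fun hy => hxy.2 (h.adj_left y hy)
  have hyT : y ∉ T := fun hy => (h.adj_right y hy).ne rfl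
  rw [card_insert_of_notMem (by simp [hxy.ne, hxS, hxT]),
    card_insert_of_notMem (by simp [hyS, hyT])]

variable [Fintype V] [DecidableRel G.Adj] {k mu : ℕ}

theorem card_union_lt_degree [DecidableEq V] (h : IsHallObstruction G x y S T)
    (hxy : Gᶜ.Adj x y) {d : V} (hd : d ∈ S ∩ T) : #(S ∪ T) < G.degree d := by
  have hle := card_le_degree_of_forall_adj (h.adj_of_mem_inter hd)
  have herase := pred_card_le_card_erase (s := insert x (insert y (S ∪ T))) (a := d)
  rw [h.card_insert_insert_union hxy] at herase
  omega

theorem card_union_le_card_commonNeighbors [DecidableEq V] (h : IsHallObstruction G x y S T)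
    (hxy : Gᶜ.Adj x y) {d e : V} (hd : d ∈ S ∩ T) (he : e ∈ S ∩ T) :
    #(S ∪ T) ≤ Fintype.card (G.commonNeighbors d e) := by
  let P := insert x (insert y (S ∪ T))
  have hP : #P = #(S ∪ T) + 2 := h.card_insert_insert_union hxy
  have hle : #((P.erase d).erase e) ≤ Fintype.card (G.commonNeighbors d e) :=
    card_le_card_commonNeighbors
      (fun r hr => h.adj_of_mem_inter hd r (erase_subset _ _ hr))
      (fun r hr => h.adj_of_mem_inter he r (erase_subset_erase e (erase_subset d P) hr))
  have herase_d := pred_card_le_card_erase (s := P) (a := d)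
  have herase_e := pred_card_le_card_erase (s := P.erase d) (a := e)
  omega

theorem disjoint (h : IsHallObstruction G x y S T) (hxy : Gᶜ.Adj x y)
    (hdeg : ∀ v, G.degree v ≤ k)
    (hadj : ∀ v w, G.Adj v w → 2 * Fintype.card (G.commonNeighbors v w) ≤ k)
    (hlt : k < #S + #T) : Disjoint S T := by
  classical
  rw [disjoint_iff_inter_eq_empty, eq_empty_iff_forall_notMem]
  intro d hd
  have hcard := card_union_add_card_inter S T
  have hinter : 1 < #(S ∩ T) := by
    have hunion := (h.card_union_lt_degree hxy hd).trans_le (hdeg d)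
    omega
  obtain ⟨e, he, hed⟩ := exists_mem_ne hinter d
  have hde : G.Adj d e := h.adj_of_ne d (mem_inter.1 hd).1 e (mem_inter.1 he).2 hed.symm
  have hunion : 2 * #(S ∪ T) ≤ k :=
    (Nat.mul_le_mul_left 2 (h.card_union_le_card_commonNeighbors hxy hd he)).trans (hadj d e hde)
  have hinter_le := card_le_card (inter_subset_union (s := S) (t := T))
  omega

theorem card_left_le_card_commonNeighbors (h : IsHallObstruction G x y S T) {t : V}
    (htT : t ∈ T) (htS : t ∉ S) : #S ≤ Fintype.card (G.commonNeighbors x t) :=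
  card_le_card_commonNeighbors h.adj_left fun s hs =>
    (h.adj_of_ne s hs t htT (ne_of_mem_of_not_mem hs htS)).symm

theorem exists_mem_right_adj (h : IsHallObstruction G x y S T) (hxy : Gᶜ.Adj x y)
    (hcompl : ∀ v w, Gᶜ.Adj v w → Fintype.card (G.commonNeighbors v w) = mu)
    (hT : T.Nonempty) (hlt : G.degree y < #S + #T) : ∃ c ∈ T, G.Adj x c := by
  classical
  by_contra! hno
  obtain ⟨t, ht⟩ := hT
  have hS_le : #S ≤ mu := by
    have htS : t ∉ S := fun hS => hno t ht (h.adj_left t hS)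
    have hxt : Gᶜ.Adj x t := ⟨fun hxt => hxy.2 (h.adj_right x (hxt ▸ ht)).symm, hno t ht⟩
    exact (h.card_left_le_card_commonNeighbors ht htS).trans_eq (hcompl x t hxt)
  have hT_le : #T + mu ≤ G.degree y := by
    have hdisj : Disjoint T (G.commonNeighbors x y).toFinset :=
      disjoint_left.2 fun c hc hcxy => hno c hc (Set.mem_toFinset.1 hcxy).1
    rw [← hcompl x y hxy, ← Set.toFinset_card, ← card_union_of_disjoint hdisj]
    exact card_le_degree_of_forall_adj fun r hr =>
      (mem_union.1 hr).elim (h.adj_right r) fun hrxy => (Set.mem_toFinset.1 hrxy).2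
  omega

theorem two_mul_card_left_le (h : IsHallObstruction G x y S T) (hxy : Gᶜ.Adj x y)
    (hdeg : ∀ v, G.degree v ≤ k)
    (hadj : ∀ v w, G.Adj v w → 2 * Fintype.card (G.commonNeighbors v w) ≤ k)
    (hcompl : ∀ v w, Gᶜ.Adj v w → Fintype.card (G.commonNeighbors v w) = mu)
    (hlt : k < #S + #T) : 2 * #S ≤ k := by
  have hT : T.Nonempty := by
    have hS := (card_le_degree_of_forall_adj h.adj_left).trans (hdeg x)
    exact card_pos.1 (by omega)
  obtain ⟨c, hcT, hxc⟩ := h.exists_mem_right_adj hxy hcompl hT ((hdeg y).trans_lt hlt)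
  have hcS : c ∉ S := disjoint_right.1 (h.disjoint hxy hdeg hadj hlt) hcT
  exact (Nat.mul_le_mul_left 2 (h.card_left_le_card_commonNeighbors hcT hcS)).trans (hadj x c hxc)

theorem card_add_card_le (h : IsHallObstruction G x y S T) (hxy : Gᶜ.Adj x y)
    (hdeg : ∀ v, G.degree v ≤ k)
    (hadj : ∀ v w, G.Adj v w → 2 * Fintype.card (G.commonNeighbors v w) ≤ k)
    (hcompl : ∀ v w, Gᶜ.Adj v w → Fintype.card (G.commonNeighbors v w) = mu) :
    #S + #T ≤ k := by
  by_contra! hlt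
  have hS := h.two_mul_card_left_le hxy hdeg hadj hcompl hlt
  have hT := h.symm.two_mul_card_left_le hxy.symm hdeg hadj hcompl (by omega)
  omega

end IsHallObstruction

section ForbiddenSet

variable {V : Type*} [Fintype V] {G : SimpleGraph V} [DecidableRel G.Adj] {k mu : ℕ}

theorem exists_neighborSet_equiv_compl_adj (hreg : G.IsRegularOfDegree k)
    (hadj : ∀ v w, G.Adj v w → 2 * Fintype.card (G.commonNeighbors v w) ≤ k)
    (hcompl : ∀ v w, Gᶜ.Adj v w → Fintype.card (G.commonNeighbors v w) = mu)
    {x y : V} (hxy : Gᶜ.Adj x y) :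
    ∃ e : G.neighborSet x ≃ G.neighborSet y, ∀ a, Gᶜ.Adj a.1 (e a).1 := by
  have hcard (v : V) : Fintype.card (G.neighborSet v) = k := by
    rw [G.card_neighborSet_eq_degree, hreg v]
  refine exists_equiv_forall_rel_of_card_add_card_le ((hcard x).trans (hcard y).symm)
    (fun a b => Gᶜ.Adj a.1 b.1) fun S T hST => ?_
  have hobs : IsHallObstruction G x y (S.map (.subtype _)) (T.map (.subtype _)) :=
    { adj_left := forall_mem_map.2 fun a _ => a.2
      adj_right := forall_mem_map.2 fun b _ => b.2
      adj_of_ne := forall_mem_map.2 fun a ha => forall_mem_map.2 fun b hb hab =>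
        not_not.1 fun hnadj => hST a ha b hb ⟨hab, hnadj⟩ }
  rw [hcard y, ← card_map (.subtype _) (s := S), ← card_map (.subtype _) (s := T)]
  exact hobs.card_add_card_le hxy (fun v => (hreg v).le) hadj hcompl

theorem srg_forbidden_eq_F0_general [DecidableEq V] (hreg : G.IsRegularOfDegree k)
    (hadj : ∀ v w, G.Adj v w → 2 * Fintype.card (G.commonNeighbors v w) ≤ k)
    (hcompl : ∀ v w, Gᶜ.Adj v w → Fintype.card (G.commonNeighbors v w) = mu)
    (F : Set (V × V)) (hF : IsLeast {S : Set (V × V) | ForbiddenClosed G S} F) :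
    F = {p : V × V | p.1 = p.2 ∨ G.Adj p.1 p.2} := by
  refine (hF.2 ⟨fun _ _ hxy => hxy, fun x y hno => ?_⟩).antisymm fun p hp => hF.1.1 p.1 p.2 hp
  by_contra hxy
  obtain ⟨e, he⟩ := exists_neighborSet_equiv_compl_adj hreg hadj hcompl (not_or.1 hxy)
  exact hno (exists_isAvoidingFlow_of_equiv e fun a => not_or.2 (he a))

end ForbiddenSet

/-- For a connected, non-complete strongly regular graph with parameters
$(n, k, λ, μ)$ satisfying $2·\max(λ, μ) ≤ k$ or $2λ < k$, the forbidden set `F`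
equals $F_0$: the only forbidden states are the diagonal and adjacent pairs. -/
theorem srg_forbidden_eq_F0 {V : Type*} [Fintype V] [DecidableEq V]
    (G : SimpleGraph V) [DecidableRel G.Adj]
    (n k lam mu : ℕ) (hsrg : G.IsSRGWith n k lam mu)
    (hconn : G.Connected)
    (hnoncomplete : ∃ x y : V, x ≠ y ∧ ¬ G.Adj x y)
    (hparam : 2 * max lam mu ≤ k ∨ 2 * lam < k)
    (F : Set (V × V)) (hF : IsLeast {S : Set (V × V) | ForbiddenClosed G S} F) :
    F = {p : V × V | p.1 = p.2 ∨ G.Adj p.1 p.2} := by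
  have hk : 2 * lam ≤ k := by omega
  exact srg_forbidden_eq_F0_general hsrg.regular (fun v w hvw => by rwa [hsrg.of_adj v w hvw])
    (fun v w hvw => hsrg.of_not_adj hvw.1 hvw.2) F hF
end

section
/- Let G be a connected, non-complete strongly regular graph with parameters (n, k, λ, μ) such that 2·max(λ, μ) ≤ k or 2λ < k. Then for any two distinct non-adjacent vertices x and y, there exists a bijection m : N(x) → N(y) between their neighborhoods such that for every v ∈ N(x), m(v) ≠ v and m(v) is not adjacent to v. -/
open Finset

/-!
By Hall's theorem it suffices that `#S + #T ≤ k` whenever `S ⊆ N(x)` and `T ⊆ N(y)` are such that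
every vertex of `S` is equal or adjacent to every vertex of `T`.

* If `S` and `T` meet in a single vertex `c`, then `x`, `y` and `(S ∪ T) \ {c}` lie in `N(c)`, so
  `#(S ∪ T) + 1 ≤ k`. If they share distinct vertices `c` and `d`, then `x`, `y` and
  `(S ∪ T) \ {c, d}` lie in `N(c) ∩ N(d)`, so `#(S ∪ T) ≤ λ ≤ k / 2`.
* If `S` and `T` are disjoint and some `c ∈ S` is adjacent to `y`, then `T ⊆ N(c) ∩ N(y)` gives
  `#T ≤ λ ≤ k / 2`. If no `c ∈ S` is adjacent to `y`, then `S ⊆ N(x) \ N(y)` and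
  `T ⊆ N(s) ∩ N(y)` for any `s ∈ S`, so `#S + #T ≤ (k - μ) + μ`. The same holds with the roles
  of `S` and `T` exchanged.
-/

theorem exists_bijOn_of_card_add_card_le {α β : Type*} [Nonempty β] {A : Finset α} {B : Finset β}
    {r : α → β → Prop} (hBA : #B ≤ #A)
    (h : ∀ S ⊆ A, ∀ T ⊆ B, (∀ a ∈ S, ∀ b ∈ T, ¬ r a b) → #S + #T ≤ #B) :
    ∃ m : α → β, Set.BijOn m A B ∧ ∀ a ∈ A, r a (m a) := by
  classical
  let related (a : A) : Finset β := {b ∈ B | r a b}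
  have hall (S : Finset A) : #S ≤ #(S.biUnion related) := by
    have hsub : S.biUnion related ⊆ B := biUnion_subset.2 fun _ _ ↦ filter_subset _ _
    have hle := h (S.map (.subtype _)) (map_subtype_subset S) (B \ S.biUnion related)
      sdiff_subset (by
        simp only [mem_map, mem_sdiff, mem_biUnion, not_exists, not_and]
        rintro _ ⟨a, ha, rfl⟩ b ⟨hb, hb'⟩ hab
        exact hb' a ha (mem_filter.2 ⟨hb, hab⟩))
    rw [card_map] at hle
    have := card_sdiff_add_card_eq_card hsub
    omega
  obtain ⟨f, hf, hfr⟩ := (all_card_le_biUnion_card_iff_exists_injective related).1 hall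
  obtain ⟨m, rfl⟩ := Subtype.exists_pi_extension (α := fun _ ↦ β) f
  have hmem (a : α) (ha : a ∈ A) : m a ∈ B ∧ r a (m a) := mem_filter.1 (hfr ⟨a, ha⟩)
  have hmaps : Set.MapsTo m A B := fun a ha ↦ (hmem a ha).1
  have hinj : Set.InjOn m A := Set.injOn_iff_injective.2 hf
  exact ⟨m, ⟨hmaps, hinj, surjOn_of_injOn_of_card_le m hmaps hinj hBA⟩, fun a ha ↦ (hmem a ha).2⟩

theorem card_insert_insert_union_of_subset_neighborFinset {V : Type*} [DecidableEq V]
    {G : SimpleGraph V} [G.LocallyFinite] {x y : V} {S T : Finset V}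
    (hxy : x ≠ y) (hnadj : ¬ G.Adj x y)
    (hS : S ⊆ G.neighborFinset x) (hT : T ⊆ G.neighborFinset y) :
    #(insert x (insert y (S ∪ T))) = #(S ∪ T) + 2 := by
  have hx : x ∉ insert y (S ∪ T) := by
    simp only [mem_insert, mem_union, not_or]
    exact ⟨hxy, fun hxS ↦ G.notMem_neighborFinset_self x (hS hxS),
      fun hxT ↦ hnadj ((G.mem_neighborFinset y x).1 (hT hxT)).symm⟩
  have hy : y ∉ S ∪ T := by
    simp only [mem_union, not_or]
    exact ⟨fun hyS ↦ hnadj ((G.mem_neighborFinset x y).1 (hS hyS)),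
      fun hyT ↦ G.notMem_neighborFinset_self y (hT hyT)⟩
  rw [card_insert_of_notMem hx, card_insert_of_notMem hy]

/-- Two possibly overlapping vertex sets form a cross-clique if every vertex of the first is
adjacent to every other vertex of the second. These are the pairs of sets that obstruct a matching
along non-edges of `G`. -/
def IsCrossClique {V : Type*} (G : SimpleGraph V) (S T : Finset V) : Prop :=
  ∀ ⦃s⦄, s ∈ S → ∀ ⦃t⦄, t ∈ T → s ≠ t → G.Adj s t

namespace IsCrossClique

variable {V : Type*} {G : SimpleGraph V} {x y : V} {S T : Finset V}

theorem symm (h : IsCrossClique G S T) : IsCrossClique G T S :=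
  fun _ ht _ hs hne ↦ (h hs ht hne.symm).symm

variable [DecidableEq V] [G.LocallyFinite] {k μ : ℕ}

theorem erase_subset_neighborFinset (h : IsCrossClique G S T) {s : V} (hs : s ∈ S) :
    T.erase s ⊆ G.neighborFinset s := fun t ht ↦
  (G.mem_neighborFinset s t).2 (h hs (mem_of_mem_erase ht) (ne_of_mem_erase ht).symm)

theorem subset_neighborFinset_inter (h : IsCrossClique G S T) (hT : T ⊆ G.neighborFinset y)
    {s : V} (hs : s ∈ S) (hsT : s ∉ T) : T ⊆ G.neighborFinset s ∩ G.neighborFinset y :=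
  subset_inter (erase_eq_of_notMem hsT ▸ h.erase_subset_neighborFinset hs) hT

theorem card_add_card_le_of_forall_not_adj (h : IsCrossClique G S T)
    (hreg : G.IsRegularOfDegree k)
    (hμ : ∀ a b, a ≠ b → ¬ G.Adj a b → #(G.neighborFinset a ∩ G.neighborFinset b) = μ)
    (hxy : x ≠ y) (hnadj : ¬ G.Adj x y)
    (hS : S ⊆ G.neighborFinset x) (hT : T ⊆ G.neighborFinset y)
    (hSy : ∀ s ∈ S, ¬ G.Adj s y) : #S + #T ≤ k := by
  obtain rfl | ⟨s, hs⟩ := S.eq_empty_or_nonempty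
  · simpa only [card_empty, zero_add, G.card_neighborFinset_eq_degree, hreg.degree_eq y]
      using card_le_card hT
  have hsy : s ≠ y := by
    rintro rfl
    exact hnadj ((G.mem_neighborFinset x s).1 (hS hs))
  have hsT : s ∉ T := fun hst ↦ hSy s hs ((G.mem_neighborFinset y s).1 (hT hst)).symm
  have hSsub : S ⊆ G.neighborFinset x \ G.neighborFinset y := fun a ha ↦
    mem_sdiff.2 ⟨hS ha, fun hay ↦ hSy a ha ((G.mem_neighborFinset y a).1 hay).symm⟩
  calc #S + #T
      ≤ #(G.neighborFinset x \ G.neighborFinset y) + #(G.neighborFinset s ∩ G.neighborFinset y) :=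
        add_le_add (card_le_card hSsub) (card_le_card (h.subset_neighborFinset_inter hT hs hsT))
    _ = #(G.neighborFinset x \ G.neighborFinset y)
          + #(G.neighborFinset x ∩ G.neighborFinset y) := by
        rw [hμ s y hsy (hSy s hs), hμ x y hxy hnadj]
    _ = k := by
        rw [card_sdiff_add_card_inter, G.card_neighborFinset_eq_degree, hreg.degree_eq]

theorem card_add_card_le_of_disjoint (h : IsCrossClique G S T) (hreg : G.IsRegularOfDegree k)
    (hadj : ∀ a b, G.Adj a b → 2 * #(G.neighborFinset a ∩ G.neighborFinset b) ≤ k)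
    (hμ : ∀ a b, a ≠ b → ¬ G.Adj a b → #(G.neighborFinset a ∩ G.neighborFinset b) = μ)
    (hxy : x ≠ y) (hnadj : ¬ G.Adj x y)
    (hS : S ⊆ G.neighborFinset x) (hT : T ⊆ G.neighborFinset y) (hST : Disjoint S T) :
    #S + #T ≤ k := by
  by_cases hSy : ∀ s ∈ S, ¬ G.Adj s y
  · exact h.card_add_card_le_of_forall_not_adj hreg hμ hxy hnadj hS hT hSy
  by_cases hTx : ∀ t ∈ T, ¬ G.Adj t x
  · rw [add_comm]
    exact h.symm.card_add_card_le_of_forall_not_adj hreg hμ hxy.symm (hnadj ·.symm) hT hS hTx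
  push Not at hSy hTx
  obtain ⟨s, hs, hsy⟩ := hSy
  obtain ⟨t, ht, htx⟩ := hTx
  have hTle := card_le_card (h.subset_neighborFinset_inter hT hs (disjoint_left.1 hST hs))
  have hSle := card_le_card (h.symm.subset_neighborFinset_inter hS ht (disjoint_right.1 hST ht))
  have := hadj s y hsy
  have := hadj t x htx
  omega

theorem inter_insert_insert_union (h : IsCrossClique G S T)
    (hS : S ⊆ G.neighborFinset x) (hT : T ⊆ G.neighborFinset y) :
    IsCrossClique G (S ∩ T) (insert x (insert y (S ∪ T))) := by
  intro c hc a ha hne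
  obtain ⟨hcS, hcT⟩ := mem_inter.1 hc
  simp only [mem_insert, mem_union] at ha
  obtain rfl | rfl | haS | haT := ha
  · exact ((G.mem_neighborFinset a c).1 (hS hcS)).symm
  · exact ((G.mem_neighborFinset a c).1 (hT hcT)).symm
  · exact h.symm hcT haS hne
  · exact h hcS haT hne

theorem card_add_card_le_of_inter_nonempty (h : IsCrossClique G S T)
    (hreg : G.IsRegularOfDegree k)
    (hadj : ∀ a b, G.Adj a b → 2 * #(G.neighborFinset a ∩ G.neighborFinset b) ≤ k)
    (hxy : x ≠ y) (hnadj : ¬ G.Adj x y)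
    (hS : S ⊆ G.neighborFinset x) (hT : T ⊆ G.neighborFinset y) (hST : (S ∩ T).Nonempty) :
    #S + #T ≤ k := by
  set J := insert x (insert y (S ∪ T))
  have hcross : IsCrossClique G (S ∩ T) J := h.inter_insert_insert_union hS hT
  have hJcard : #J = #(S ∪ T) + 2 :=
    card_insert_insert_union_of_subset_neighborFinset hxy hnadj hS hT
  have hsubJ : S ∩ T ⊆ J :=
    inter_subset_union.trans ((subset_insert _ _).trans (subset_insert _ _))
  have hsum := card_union_add_card_inter S T
  obtain ⟨c, hc⟩ | ⟨c, hc, d, hd, hcd⟩ := hST.exists_eq_singleton_or_nontrivial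
  · have hcmem : c ∈ S ∩ T := hc ▸ mem_singleton_self c
    have hle := card_le_card (hcross.erase_subset_neighborFinset hcmem)
    rw [card_erase_of_mem (hsubJ hcmem), G.card_neighborFinset_eq_degree, hreg.degree_eq] at hle
    rw [hc, card_singleton] at hsum
    omega
  · have hsub : (J.erase c).erase d ⊆ G.neighborFinset c ∩ G.neighborFinset d :=
      subset_inter ((erase_subset _ _).trans (hcross.erase_subset_neighborFinset hc))
        ((erase_subset_erase _ (erase_subset _ _)).trans
          (hcross.erase_subset_neighborFinset hd))
    have hle := card_le_card hsub
    rw [card_erase_of_mem (mem_erase.2 ⟨hcd.symm, hsubJ hd⟩), card_erase_of_mem (hsubJ hc)] at hle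
    have := hadj c d (hcross hc (hsubJ hd) hcd)
    have := card_le_card (inter_subset_union (s := S) (t := T))
    omega

theorem card_add_card_le (h : IsCrossClique G S T) (hreg : G.IsRegularOfDegree k)
    (hadj : ∀ a b, G.Adj a b → 2 * #(G.neighborFinset a ∩ G.neighborFinset b) ≤ k)
    (hμ : ∀ a b, a ≠ b → ¬ G.Adj a b → #(G.neighborFinset a ∩ G.neighborFinset b) = μ)
    (hxy : x ≠ y) (hnadj : ¬ G.Adj x y)
    (hS : S ⊆ G.neighborFinset x) (hT : T ⊆ G.neighborFinset y) : #S + #T ≤ k := by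
  by_cases hST : Disjoint S T
  · exact h.card_add_card_le_of_disjoint hreg hadj hμ hxy hnadj hS hT hST
  · exact h.card_add_card_le_of_inter_nonempty hreg hadj hxy hnadj hS hT
      (not_disjoint_iff_nonempty_inter.1 hST)

end IsCrossClique

theorem card_neighborFinset_inter_neighborFinset {V : Type*} [Fintype V] [DecidableEq V]
    (G : SimpleGraph V) [DecidableRel G.Adj] (a b : V) :
    #(G.neighborFinset a ∩ G.neighborFinset b) = Fintype.card (G.commonNeighbors a b) := by
  rw [← Set.toFinset_card]
  congr 1
  ext v
  simp only [mem_inter, G.mem_neighborFinset, Set.mem_toFinset, G.mem_commonNeighbors]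

theorem srg_nonadjacent_neighborhood_matching_general {V : Type*} [DecidableEq V]
    {G : SimpleGraph V} [G.LocallyFinite] {k μ : ℕ} (hreg : G.IsRegularOfDegree k)
    (hadj : ∀ a b, G.Adj a b → 2 * #(G.neighborFinset a ∩ G.neighborFinset b) ≤ k)
    (hμ : ∀ a b, a ≠ b → ¬ G.Adj a b → #(G.neighborFinset a ∩ G.neighborFinset b) = μ)
    {x y : V} (hxy : x ≠ y) (hnadj : ¬ G.Adj x y) :
    ∃ m : V → V, Set.BijOn m (G.neighborSet x) (G.neighborSet y) ∧
      ∀ v ∈ G.neighborSet x, m v ≠ v ∧ ¬ G.Adj v (m v) := by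
  have : Nonempty V := ⟨x⟩
  have hcard (z : V) : #(G.neighborFinset z) = k := by
    rw [G.card_neighborFinset_eq_degree, hreg.degree_eq]
  simp only [← G.coe_neighborFinset, mem_coe]
  refine exists_bijOn_of_card_add_card_le (r := fun v w ↦ w ≠ v ∧ ¬ G.Adj v w)
    ((hcard y).trans (hcard x).symm).le fun S hS T hT hST ↦ ?_
  have hcross : IsCrossClique G S T := fun s hs t ht hne ↦
    not_not.1 fun hst ↦ hST s hs t ht ⟨hne.symm, hst⟩
  rw [hcard]
  exact hcross.card_add_card_le hreg hadj hμ hxy hnadj hS hT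

/-- For a connected, non-complete strongly regular graph with parameters
$(n, k, λ, μ)$ satisfying $2·\max(λ, μ) ≤ k$ or $2λ < k$: for any two distinct
non-adjacent vertices $x$ and $y$ there is a bijection $m : N(x) → N(y)$ such that
every $v ∈ N(x)$ satisfies $m(v) ≠ v$ and $m(v)$ is not adjacent to $v$. -/
theorem srg_nonadjacent_neighborhood_matching {V : Type*} [Fintype V] [DecidableEq V]
    (G : SimpleGraph V) [DecidableRel G.Adj]
    (n k lam mu : ℕ) (hsrg : G.IsSRGWith n k lam mu)
    (hconn : G.Connected)
    (hnoncomplete : ∃ x y : V, x ≠ y ∧ ¬ G.Adj x y)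
    (hparam : 2 * max lam mu ≤ k ∨ 2 * lam < k) :
    ∀ x y : V, x ≠ y → ¬ G.Adj x y →
      ∃ m : V → V, Set.BijOn m (G.neighborSet x) (G.neighborSet y) ∧
        ∀ v ∈ G.neighborSet x, m v ≠ v ∧ ¬ G.Adj v (m v) := by
  have hlam : 2 * lam ≤ k := by omega
  exact fun x y hxy hnadj ↦ srg_nonadjacent_neighborhood_matching_general hsrg.regular
    (fun a b hab ↦ by rwa [card_neighborFinset_inter_neighborFinset, hsrg.of_adj a b hab])
    (fun a b hab hnab ↦ by
      rw [card_neighborFinset_inter_neighborFinset, hsrg.of_not_adj hab hnab]) hxy hnadj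
end
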